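/- arXiv:1604.03089 — 6 statements merged into one kernel-verified Lean document; each statement's English description precedes it below -/
import Mathlib

section
/- Let Φ : M_n(ℂ) → M_n(ℂ) be a positive, unital, trace-preserving linear map, let σ ∈ M_n(ℂ) be positive semidefinite with Φ(σ) = σ, and let ρ ∈ M_n(ℂ) be positive semidefinite with supp ρ ⊆ supp σ. Let α, z ∈ ℝ with α ≥ z ≥ max{1, α/2}. Then Tr( ( σ^{(1−α)/(2z)} Φ(ρ)^{α/z} σ^{(1−α)/(2z)} )^z ) ≤ Tr( ( σ^{(1−α)/(2z)} ρ^{α/z} σ^{(1−α)/(2z)} )^z ), where for α > 1 the negative power σ^{(1−α)/(2z)} is taken in the Moore–Penrose sense (inverting only the nonzero eigenvalues). (For α > 1 this is the monotonicity D_{α,z}(Φ(ρ)‖Φ(σ)) ≤ D_{α,z}(ρ‖σ) of the α-z-Rényi divergence.) -/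
open Matrix
open scoped ComplexOrder

/-- Moore–Penrose power of a matrix: apply `x ↦ x ^ t` to the nonzero eigenvalues
(with `0 ^ t := 0`) via the continuous functional calculus; for `t < 0` this is the
corresponding power of the Moore–Penrose inverse. -/
noncomputable def mpow {n : ℕ} (A : Matrix (Fin n) (Fin n) ℂ) (t : ℝ) :
    Matrix (Fin n) (Fin n) ℂ :=
  cfc (fun x : ℝ => if x = 0 then 0 else x ^ t) A

lemma spec {n : ℕ} (A : Matrix (Fin n) (Fin n) ℂ) (hA : A.IsHermitian) :
    ∃ (l : Fin n → ℝ) (Q : Fin n → Matrix (Fin n) (Fin n) ℂ),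
      (∀ k, (Q k).PosSemidef) ∧ (∑ k, Q k = 1) ∧ (∀ k, (Q k).trace = 1) ∧
      (∀ k j, Q k * Q j = if k = j then Q k else 0) ∧
      (∀ f : ℝ → ℝ, cfc f A = ∑ k, (f (l k) : ℂ) • Q k) ∧
      (A.PosSemidef → ∀ k, 0 ≤ l k) := by
  classical
  set U : Matrix (Fin n) (Fin n) ℂ := (hA.eigenvectorUnitary : Matrix (Fin n) (Fin n) ℂ) with hU
  have h1 : star U * U = 1 := Unitary.coe_star_mul_self hA.eigenvectorUnitary
  have h2 : U * star U = 1 := Unitary.coe_mul_star_self hA.eigenvectorUnitary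
  have hsum : ∀ g : Fin n → ℂ, U * diagonal g * star U =
      ∑ k, g k • (U * diagonal (Pi.single k 1) * star U) := by
    intro g
    have : diagonal g = ∑ k, g k • (diagonal (Pi.single k 1) : Matrix (Fin n) (Fin n) ℂ) := by
      ext i j
      by_cases hij : i = j
      · subst hij
        simp [Matrix.sum_apply, Pi.single_apply]
      · simp [Matrix.sum_apply, hij]
    rw [this, Finset.mul_sum, Finset.sum_mul]
    simp
  refine ⟨hA.eigenvalues, fun k => U * diagonal (Pi.single k 1) * star U, ?_, ?_, ?_, ?_, ?_, ?_⟩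
  · intro k
    apply PosSemidef.mul_mul_conjTranspose_same
    apply PosSemidef.diagonal
    exact Pi.single_nonneg.2 zero_le_one
  · have := hsum (fun _ => 1)
    simp only [one_smul] at this
    rw [← this]
    simp [h2]
  · intro k
    rw [trace_mul_cycle, h1]
    simp
  · intro k j
    have : U * diagonal (Pi.single k 1) * star U * (U * diagonal (Pi.single j 1) * star U)
      = U * (diagonal (Pi.single k 1) * diagonal (Pi.single j 1)) * star U := by
      calc _ = U * diagonal (Pi.single k 1) * (star U * U) * diagonal (Pi.single j 1) * star U := by
            noncomm_ring
        _ = _ := by rw [h1]; noncomm_ring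
    rw [this, diagonal_mul_diagonal]
    split_ifs with h
    · subst h
      congr 3
      ext i
      simp [Pi.single_apply]
    · have : (fun i => (Pi.single k 1 : Fin n → ℂ) i * (Pi.single j 1 : Fin n → ℂ) i) = 0 := by
        ext i
        simp only [Pi.single_apply, Pi.zero_apply]
        grind
      rw [this]
      simp
  · intro f
    rw [hA.cfc_eq f, IsHermitian.cfc, Unitary.conjStarAlgAut_apply]
    exact hsum _
  · intro h k
    exact h.eigenvalues_nonneg k

lemma gen_psd {n : ℕ} (E : Fin n → Matrix (Fin n) (Fin n) ℂ) (hE : ∀ k, (E k).PosSemidef)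
    (w c : Fin n → ℝ) (hw : ∀ k, 0 ≤ w k) (C : Matrix (Fin n) (Fin n) ℂ) (hC : C.IsHermitian) :
    (∑ k, ((w k * c k ^ 2 : ℝ) : ℂ) • E k - C * (∑ k, ((w k * c k : ℝ) : ℂ) • E k)
      - (∑ k, ((w k * c k : ℝ) : ℂ) • E k) * C + C * (∑ k, (w k : ℂ) • E k) * C).PosSemidef := by
  have : (∑ k, ((w k * c k ^ 2 : ℝ) : ℂ) • E k - C * (∑ k, ((w k * c k : ℝ) : ℂ) • E k)
      - (∑ k, ((w k * c k : ℝ) : ℂ) • E k) * C + C * (∑ k, (w k : ℂ) • E k) * C)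
      = ∑ k, (w k : ℂ) • (((c k : ℂ) • 1 - C) * E k * ((c k : ℂ) • 1 - C)ᴴ) := by
    simp only [Finset.mul_sum, Finset.sum_mul, ← Finset.sum_sub_distrib, ← Finset.sum_add_distrib]
    refine Finset.sum_congr rfl fun k _ => ?_
    rw [conjTranspose_sub, hC.eq, conjTranspose_smul, conjTranspose_one]
    simp only [RCLike.star_def, Complex.conj_ofReal, sub_mul, mul_sub, smul_mul_assoc,
      mul_smul_comm, one_mul, mul_one, smul_sub, smul_smul]
    push_cast
    module
  rw [this]
  refine posSemidef_sum _ fun k _ => ?_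
  exact ((hE k).mul_mul_conjTranspose_same _).smul (by exact_mod_cast hw k)

lemma cfc_herm {n : ℕ} (A : Matrix (Fin n) (Fin n) ℂ) (f : ℝ → ℝ) : (cfc f A).IsHermitian :=
  cfc_predicate f A

lemma spec_self {n : ℕ} {A : Matrix (Fin n) (Fin n) ℂ} (hA : A.IsHermitian) {l : Fin n → ℝ}
    {Q : Fin n → Matrix (Fin n) (Fin n) ℂ}
    (h : ∀ f : ℝ → ℝ, cfc f A = ∑ k, (f (l k) : ℂ) • Q k) : A = ∑ k, (l k : ℂ) • Q k := by
  conv_lhs => rw [← cfc_id' ℝ A hA.isSelfAdjoint]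
  rw [h]

lemma kadison_aux {n : ℕ} (E : Fin n → Matrix (Fin n) (Fin n) ℂ) (hE : ∀ k, (E k).PosSemidef)
    (hE1 : ∑ k, E k = 1) (l : Fin n → ℝ) (B : Matrix (Fin n) (Fin n) ℂ) (hB : B.IsHermitian)
    (hBl : B = ∑ k, (l k : ℂ) • E k) :
    (∑ k, ((l k ^ 2 : ℝ) : ℂ) • E k - B * B).PosSemidef := by
  have := gen_psd E hE (fun _ => 1) l (by simp) B hB
  simp only [one_mul, ← hBl, Complex.ofReal_one, one_smul, hE1, mul_one] at this
  convert this using 1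
  abel

lemma inv_aux {n : ℕ} (E : Fin n → Matrix (Fin n) (Fin n) ℂ) (hE : ∀ k, (E k).PosSemidef)
    (hE1 : ∑ k, E k = 1) (l : Fin n → ℝ) (hl : ∀ k, 0 ≤ l k)
    (B : Matrix (Fin n) (Fin n) ℂ) (hB : B.PosSemidef)
    (hBl : B = ∑ k, (l k : ℂ) • E k) (t : ℝ) (ht : 0 < t) :
    (∑ k, (((t + l k)⁻¹ : ℝ) : ℂ) • E k - cfc (fun x : ℝ => (t + x)⁻¹) B).PosSemidef := by
  set C := cfc (fun x : ℝ => (t + x)⁻¹) B with hC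
  have := gen_psd E hE (fun k => t + l k) (fun k => (t + l k)⁻¹) (fun k => by have := hl k; positivity)
    C (cfc_herm _ _)
  have h0 : ∀ k, t + l k ≠ 0 := fun k => by have := hl k; positivity
  have e1 : ∀ k, (t + l k) * (t + l k)⁻¹ ^ 2 = (t + l k)⁻¹ := fun k => by
    have := h0 k; field_simp
  have e2 : ∀ k, (t + l k) * (t + l k)⁻¹ = 1 := fun k => mul_inv_cancel₀ (h0 k)
  have e3 : ∑ k, ((t + l k : ℝ) : ℂ) • E k = (t : ℂ) • 1 + B := by
    rw [hBl, ← hE1, Finset.smul_sum, ← Finset.sum_add_distrib]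
    refine Finset.sum_congr rfl fun k _ => ?_
    push_cast
    module
  have e4 : C * ((t : ℂ) • 1 + B) = 1 := by
    obtain ⟨m, Q, hQ, hQ1, -, hQQ, hf, hpos⟩ := spec B hB.1
    have hm := hpos hB
    rw [hC, hf, spec_self hB.1 hf, ← hQ1, Finset.smul_sum, ← Finset.sum_add_distrib,
      Finset.sum_mul]
    refine Finset.sum_congr rfl fun k _ => ?_
    rw [Finset.mul_sum, Finset.sum_eq_single k]
    · rw [← add_smul, smul_mul_smul_comm, hQQ, if_pos rfl]
      have : t + m k ≠ 0 := by have := hm k; positivity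
      have h3 : (t : ℂ) + m k ≠ 0 := by exact_mod_cast this
      push_cast
      rw [inv_mul_cancel₀ h3, one_smul]
    · intro j _ hj
      rw [← add_smul, smul_mul_smul_comm, hQQ, if_neg (Ne.symm hj), smul_zero]
    · simp
  simp only [e1, e2, e3, e4, Complex.ofReal_one, one_smul, hE1, mul_one, one_mul] at this
  convert this using 1
  abel

open MeasureTheory in
lemma jensen_aux {n : ℕ} (E : Fin n → Matrix (Fin n) (Fin n) ℂ) (hE : ∀ k, (E k).PosSemidef)
    (hE1 : ∑ k, E k = 1) (l : Fin n → ℝ) (hl : ∀ k, 0 ≤ l k)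
    (B : Matrix (Fin n) (Fin n) ℂ) (hB : B.PosSemidef)
    (hBl : B = ∑ k, (l k : ℂ) • E k) (p : ℝ) (hp1 : 1 ≤ p) (hp2 : p ≤ 2) :
    (∑ k, ((l k ^ p : ℝ) : ℂ) • E k - cfc (fun x : ℝ => x ^ p) B).PosSemidef := by
  rcases hp1.eq_or_lt with rfl | hp1
  · simp only [Real.rpow_one]
    rw [cfc_id' ℝ B hB.1.isSelfAdjoint, ← hBl, sub_self]
    exact PosSemidef.zero
  rcases hp2.eq_or_lt with rfl | hp2
  · have := kadison_aux E hE hE1 l B hB.1 hBl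
    simp only [Real.rpow_two]
    rw [cfc_pow_id (R := ℝ) B 2 hB.1.isSelfAdjoint, sq]
    exact this
  obtain ⟨μ, hμ⟩ := Real.exists_measure_rpow_eq_integral_rpowIntegrand₁₂ (p := p) ⟨hp1, hp2⟩
  obtain ⟨m, Q, hQ, hQ1, -, hQQ, hf, hpos⟩ := spec B hB.1
  have hm := hpos hB
  have hBm := spec_self hB.1 hf
  -- expression of the quadratic form
  have key : ∀ (g : ℝ → ℝ) (v : Fin n → ℂ),
      RCLike.re (star v ⬝ᵥ ((∑ k, (g (l k) : ℂ) • E k - cfc g B) *ᵥ v))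
        = ∑ k, g (l k) * (star v ⬝ᵥ (E k *ᵥ v)).re - ∑ k, g (m k) * (star v ⬝ᵥ (Q k *ᵥ v)).re := by
    intro g v
    rw [hf, sub_mulVec, dotProduct_sub, Matrix.sum_mulVec, Matrix.sum_mulVec, dotProduct_sum,
      dotProduct_sum]
    simp [smul_mulVec, dotProduct_smul]
  have herm : (∑ k, ((l k ^ p : ℝ) : ℂ) • E k - cfc (fun x : ℝ => x ^ p) B).IsHermitian := by
    refine IsHermitian.sub ?_ (cfc_herm _ _)
    exact (posSemidef_sum _ fun k _ => (hE k).smul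
      (by exact_mod_cast Real.rpow_nonneg (hl k) p)).1
  refine PosSemidef.of_dotProduct_mulVec_nonneg herm fun v => ?_
  have him := herm.im_star_dotProduct_mulVec_self v
  rw [Complex.le_def]
  refine ⟨?_, him.symm⟩
  change 0 ≤ RCLike.re (star v ⬝ᵥ _)
  rw [key (fun x => x ^ p) v, sub_nonneg]
  have int : ∀ (a c : Fin n → ℝ), (∀ k, 0 ≤ a k) →
      Integrable (fun t => ∑ k, Real.rpowIntegrand₁₂ p t (a k) * c k) (μ.restrict (Set.Ioi 0)) := by
    intro a c ha
    exact integrable_finsetSum _ fun k _ => ((hμ (a k) (ha k)).1).mul_const _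
  have rep : ∀ (a c : Fin n → ℝ), (∀ k, 0 ≤ a k) →
      ∑ k, a k ^ p * c k = ∫ t in Set.Ioi 0, ∑ k, Real.rpowIntegrand₁₂ p t (a k) * c k ∂μ := by
    intro a c ha
    rw [integral_finsetSum _ fun k _ => ((hμ (a k) (ha k)).1).mul_const _]
    refine Finset.sum_congr rfl fun k _ => ?_
    rw [integral_mul_const, (hμ (a k) (ha k)).2]
  rw [rep m _ hm, rep l _ hl]
  refine setIntegral_mono_on (int m _ hm) (int l _ hl) measurableSet_Ioi fun t ht => ?_
  have ht : 0 < t := ht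
  have k1 := (inv_aux E hE hE1 l hl B hB hBl t ht).re_dotProduct_nonneg v
  rw [key (fun x => (t + x)⁻¹) v] at k1
  have k2 : ∑ k, l k * (star v ⬝ᵥ (E k *ᵥ v)).re = ∑ k, m k * (star v ⬝ᵥ (Q k *ᵥ v)).re := by
    have := key (fun x => x) v
    rw [cfc_id' ℝ B hB.1.isSelfAdjoint, ← hBl] at this
    simp at this
    linarith
  have k3 : ∑ k, (star v ⬝ᵥ (E k *ᵥ v)).re = ∑ k, (star v ⬝ᵥ (Q k *ᵥ v)).re := by
    rw [← Complex.re_sum, ← Complex.re_sum, ← dotProduct_sum, ← dotProduct_sum,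
      ← Matrix.sum_mulVec, ← Matrix.sum_mulVec, hE1, hQ1]
  have ex : ∀ (a c : Fin n → ℝ), ∑ k, Real.rpowIntegrand₁₂ p t (a k) * c k
      = t ^ (p - 1) * (t⁻¹ * ∑ k, a k * c k + t * ∑ k, (t + a k)⁻¹ * c k - ∑ k, c k) := by
    intro a c
    simp only [Finset.mul_sum, ← Finset.sum_add_distrib, ← Finset.sum_sub_distrib]
    refine Finset.sum_congr rfl fun k _ => ?_
    rw [Real.rpowIntegrand₁₂]
    ring
  rw [ex, ex, k2, k3]
  have : 0 ≤ t ^ (p - 1) := by positivity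
  refine mul_le_mul_of_nonneg_left ?_ this
  have := mul_le_mul_of_nonneg_left (sub_nonneg.1 k1) ht.le
  linarith

section maps
variable {n : ℕ} (Φ : Matrix (Fin n) (Fin n) ℂ →ₗ[ℂ] Matrix (Fin n) (Fin n) ℂ)

lemma map_herm (hΦpos : ∀ X, X.PosSemidef → (Φ X).PosSemidef)
    (A : Matrix (Fin n) (Fin n) ℂ) (hA : A.IsHermitian) : (Φ A).IsHermitian := by
  obtain ⟨l, Q, hQ, hQ1, -, -, hf, -⟩ := spec A hA
  rw [spec_self hA hf, map_sum, IsHermitian, conjTranspose_sum]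
  refine Finset.sum_congr rfl fun k _ => ?_
  rw [map_smul, conjTranspose_smul, (hΦpos _ (hQ k)).1.eq]
  simp

lemma map_kadison (hΦpos : ∀ X, X.PosSemidef → (Φ X).PosSemidef) (hΦunital : Φ 1 = 1)
    (A : Matrix (Fin n) (Fin n) ℂ) (hA : A.IsHermitian) :
    (Φ (A * A) - Φ A * Φ A).PosSemidef := by
  obtain ⟨l, Q, hQ, hQ1, -, -, hf, -⟩ := spec A hA
  have := kadison_aux (fun k => Φ (Q k)) (fun k => hΦpos _ (hQ k))
    (by rw [← map_sum, hQ1, hΦunital]) l (Φ A) (map_herm Φ hΦpos A hA)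
    (by conv_lhs => rw [spec_self hA hf, map_sum]
        simp only [map_smul])
  convert this using 2
  have h2 : A * A = ∑ k, ((l k ^ 2 : ℝ) : ℂ) • Q k := by
    rw [← hf (fun x => x ^ 2), cfc_pow_id (R := ℝ) A 2 hA.isSelfAdjoint, sq]
  rw [h2, map_sum]
  simp only [map_smul]

lemma lin_zero (X Y : Matrix (Fin n) (Fin n) ℂ) (hX : X.IsHermitian)
    (h : ∀ t : ℝ, ((t : ℂ) • X + ((t ^ 2 : ℝ) : ℂ) • Y).PosSemidef) : X = 0 := by
  have q0 : ∀ v, (star v ⬝ᵥ (X *ᵥ v)).re = 0 := by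
    intro v
    have := discrim_le_zero (a := (star v ⬝ᵥ (Y *ᵥ v)).re) (b := (star v ⬝ᵥ (X *ᵥ v)).re)
      (c := 0) (fun t => by
        have := (h t).re_dotProduct_nonneg v
        rw [add_mulVec, dotProduct_add, smul_mulVec, smul_mulVec, dotProduct_smul,
          dotProduct_smul] at this
        simp only [smul_eq_mul, map_add, RCLike.re_eq_complex_re, Complex.re_ofReal_mul] at this
        linarith)
    rw [discrim] at this
    nlinarith
  have q1 : ∀ v, star v ⬝ᵥ (X *ᵥ v) = 0 := fun v =>
    Complex.ext (q0 v) (hX.im_star_dotProduct_mulVec_self v)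
  have p1 : X.PosSemidef := .of_dotProduct_mulVec_nonneg hX fun v => (q1 v).ge
  have p2 : (-X).PosSemidef := .of_dotProduct_mulVec_nonneg hX.neg fun v => by
    rw [neg_mulVec, dotProduct_neg, q1 v, neg_zero]
  have t1 := p1.trace_nonneg
  have t2 := p2.trace_nonneg
  rw [trace_neg, neg_nonneg] at t2
  exact p1.trace_eq_zero_iff.1 (le_antisymm t2 t1)

/-- Jordan property with respect to Hermitian fixed points. -/
lemma map_jordan (hΦpos : ∀ X, X.PosSemidef → (Φ X).PosSemidef) (hΦunital : Φ 1 = 1)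
    (hΦtr : ∀ X, (Φ X).trace = X.trace)
    (S : Matrix (Fin n) (Fin n) ℂ) (hS : S.IsHermitian) (hfix : Φ S = S) :
    Φ (S * S) = S * S ∧ ∀ Y, Φ (S * Y + Y * S) = S * Φ Y + Φ Y * S := by
  have hSS : Φ (S * S) = S * S := by
    have := map_kadison Φ hΦpos hΦunital S hS
    rw [hfix] at this
    have h0 := this.trace_eq_zero_iff.1 (by rw [trace_sub, hΦtr, sub_self])
    exact sub_eq_zero.1 h0
  refine ⟨hSS, ?_⟩
  have herm : ∀ Y : Matrix (Fin n) (Fin n) ℂ, Y.IsHermitian →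
      Φ (S * Y + Y * S) = S * Φ Y + Φ Y * S := by
    intro Y hY
    have hΦY := map_herm Φ hΦpos Y hY
    have sym : ∀ Z : Matrix (Fin n) (Fin n) ℂ, Z.IsHermitian → (S * Z + Z * S).IsHermitian := by
      intro Z hZ
      rw [IsHermitian, conjTranspose_add, conjTranspose_mul, conjTranspose_mul, hZ.eq, hS.eq,
        add_comm]
    rw [← sub_eq_zero]
    refine lin_zero _ (Φ (Y * Y) - Φ Y * Φ Y)
      ((map_herm Φ hΦpos _ (sym Y hY)).sub (sym _ hΦY)) fun t => ?_
    have hT : (S + (t : ℂ) • Y).IsHermitian := by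
      rw [IsHermitian, conjTranspose_add, conjTranspose_smul, hS.eq, hY.eq]
      simp
    have := map_kadison Φ hΦpos hΦunital _ hT
    convert this using 1
    simp only [mul_add, add_mul, map_add, smul_mul_assoc, mul_smul_comm, map_smul, hfix, hSS]
    push_cast
    module
  intro Y
  have hre := herm _ (Matrix.isHermitian_add_transpose_self Y)
  have him := herm (Complex.I • (Y - Yᴴ)) (by
    rw [IsHermitian, conjTranspose_smul, conjTranspose_sub, conjTranspose_conjTranspose]
    simp only [RCLike.star_def, Complex.conj_I]
    module)
  have hY : Y = (1 / 2 : ℂ) • (Y + Yᴴ) - (Complex.I / 2) • (Complex.I • (Y - Yᴴ)) := by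
    rw [smul_smul]
    have : Complex.I / 2 * Complex.I = - (1 / 2) := by
      rw [div_mul_eq_mul_div, Complex.I_mul_I]; ring
    rw [this]
    module
  generalize Complex.I • (Y - Yᴴ) = K at *
  generalize Y + Yᴴ = H at *
  rw [hY]
  have : S * ((1 / 2 : ℂ) • H - (Complex.I / 2) • K) + ((1 / 2 : ℂ) • H - (Complex.I / 2) • K) * S
      = (1 / 2 : ℂ) • (S * H + H * S) - (Complex.I / 2) • (S * K + K * S) := by
    simp only [mul_sub, sub_mul, smul_mul_assoc, mul_smul_comm]
    module
  rw [this, map_sub, map_smul, map_smul, hre, him]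
  simp only [mul_sub, sub_mul, smul_mul_assoc, mul_smul_comm, map_sub, map_smul]
  module

lemma map_pow_fix (hΦpos : ∀ X, X.PosSemidef → (Φ X).PosSemidef) (hΦunital : Φ 1 = 1)
    (hΦtr : ∀ X, (Φ X).trace = X.trace)
    (S : Matrix (Fin n) (Fin n) ℂ) (hS : S.IsHermitian) (hfix : Φ S = S) (k : ℕ) :
    Φ (S ^ k) = S ^ k := by
  induction k with
  | zero => simpa using hΦunital
  | succ k ih =>
    have := (map_jordan Φ hΦpos hΦunital hΦtr S hS hfix).2 (S ^ k)
    rw [ih, ← pow_succ, ← pow_succ', ← two_smul ℂ, map_smul] at this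
    exact smul_right_injective _ (two_ne_zero (α := ℂ)) this

lemma map_cfc_fix (hΦpos : ∀ X, X.PosSemidef → (Φ X).PosSemidef) (hΦunital : Φ 1 = 1)
    (hΦtr : ∀ X, (Φ X).trace = X.trace)
    (S : Matrix (Fin n) (Fin n) ℂ) (hS : S.IsHermitian) (hfix : Φ S = S) (f : ℝ → ℝ) :
    Φ (cfc f S) = cfc f S := by
  classical
  have hfin : (spectrum ℝ S).Finite := Matrix.finite_real_spectrum
  set q : Polynomial ℝ := Lagrange.interpolate hfin.toFinset id f with hq
  have : cfc f S = Polynomial.aeval S q := by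
    rw [← cfc_polynomial q S hS.isSelfAdjoint]
    refine cfc_congr fun x hx => ?_
    exact (Lagrange.eval_interpolate_at_node (v := id) f Function.injective_id.injOn
      (hfin.mem_toFinset.2 hx)).symm
  rw [this, Polynomial.aeval_eq_sum_range, map_sum]
  refine Finset.sum_congr rfl fun k _ => ?_
  rw [← Complex.coe_smul, map_smul, map_pow_fix Φ hΦpos hΦunital hΦtr S hS hfix]

lemma map_conj (hΦpos : ∀ X, X.PosSemidef → (Φ X).PosSemidef) (hΦunital : Φ 1 = 1)
    (hΦtr : ∀ X, (Φ X).trace = X.trace)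
    (D : Matrix (Fin n) (Fin n) ℂ) (hD : D.IsHermitian) (hfix : Φ D = D)
    (Y : Matrix (Fin n) (Fin n) ℂ) : Φ (D * Y * D) = D * Φ Y * D := by
  obtain ⟨hDD, h1⟩ := map_jordan Φ hΦpos hΦunital hΦtr D hD hfix
  have hD2 : (D * D).IsHermitian := by
    rw [IsHermitian, conjTranspose_mul, hD.eq]
  obtain ⟨-, h2⟩ := map_jordan Φ hΦpos hΦunital hΦtr (D * D) hD2 hDD
  have e : ∀ Z : Matrix (Fin n) (Fin n) ℂ, D * Z * D =
      (1 / 2 : ℂ) • ((D * (D * Z + Z * D) + (D * Z + Z * D) * D) - (D * D * Z + Z * (D * D))) := by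
    intro Z
    have : (D * (D * Z + Z * D) + (D * Z + Z * D) * D) - (D * D * Z + Z * (D * D))
      = (2 : ℂ) • (D * Z * D) := by
      rw [two_smul]; noncomm_ring
    rw [this, smul_smul]; simp
  rw [e Y, map_smul, map_sub, h1, h1, h2, ← e]

lemma trace_mul_nonneg' (A B : Matrix (Fin n) (Fin n) ℂ) (hA : A.PosSemidef) (hAA : A * A = A)
    (hB : B.PosSemidef) : 0 ≤ (A * B).trace.re := by
  have : (A * B).trace = (A * B * Aᴴ).trace := by
    rw [trace_mul_cycle, hA.1.eq, hAA]
  rw [this]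
  exact (Complex.le_def.1 (hB.mul_mul_conjTranspose_same A).trace_nonneg).1

lemma trace_ineq (hΦpos : ∀ X, X.PosSemidef → (Φ X).PosSemidef) (hΦunital : Φ 1 = 1)
    (hΦtr : ∀ X, (Φ X).trace = X.trace)
    (W Y : Matrix (Fin n) (Fin n) ℂ) (hW : W.PosSemidef) (hY : Y.PosSemidef)
    (hWY : (Φ Y - W).PosSemidef) (z : ℝ) (hz : 1 ≤ z) :
    (cfc (fun x : ℝ => x ^ z) W).trace.re ≤ (cfc (fun x : ℝ => x ^ z) Y).trace.re := by
  obtain ⟨w, R, hR, hR1, hRt, hRR, hRf, hRpos⟩ := spec W hW.1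
  obtain ⟨y, Q, hQ, hQ1, hQt, -, hQf, hQpos⟩ := spec Y hY.1
  have hw := hRpos hW
  have hy := hQpos hY
  have hRi : ∀ i, R i * R i = R i := fun i => by rw [hRR, if_pos rfl]
  rw [hRf, hQf, trace_sum, trace_sum, Complex.re_sum, Complex.re_sum]
  simp only [trace_smul, hRt, hQt, smul_eq_mul, mul_one, Complex.ofReal_re]
  set c : Fin n → Fin n → ℝ := fun i k => (R i * Φ (Q k)).trace.re with hc
  have c0 : ∀ i k, 0 ≤ c i k := fun i k =>
    trace_mul_nonneg' _ _ (hR i) (hRi i) (hΦpos _ (hQ k))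
  have c1 : ∀ i, ∑ k, c i k = 1 := fun i => by
    simp only [hc]
    rw [← Complex.re_sum, ← trace_sum, ← Finset.mul_sum, ← map_sum, hQ1, hΦunital, mul_one, hRt]
    simp
  have c2 : ∀ k, ∑ i, c i k = 1 := fun k => by
    simp only [hc]
    rw [← Complex.re_sum, ← trace_sum, ← Finset.sum_mul, hR1, one_mul, hΦtr, hQt]
    simp
  have c3 : ∀ i, w i ≤ ∑ k, c i k * y k := fun i => by
    have h := trace_mul_nonneg' _ _ (hR i) (hRi i) hWY
    rw [mul_sub, trace_sub, Complex.sub_re, sub_nonneg] at h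
    have e1 : (R i * W).trace.re = w i := by
      rw [spec_self hW.1 hRf, Finset.mul_sum, Finset.sum_eq_single i]
      · rw [mul_smul_comm, hRi, trace_smul, hRt]; simp
      · intro j _ hj
        rw [mul_smul_comm, hRR, if_neg (Ne.symm hj), smul_zero]
      · simp
    have e2 : (R i * Φ Y).trace.re = ∑ k, c i k * y k := by
      rw [spec_self hY.1 hQf, map_sum, Finset.mul_sum, trace_sum, Complex.re_sum]
      refine Finset.sum_congr rfl fun k _ => ?_
      rw [map_smul, mul_smul_comm, trace_smul, smul_eq_mul, Complex.re_ofReal_mul, mul_comm]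
    rwa [e1, e2] at h
  calc ∑ i, w i ^ z ≤ ∑ i, (∑ k, c i k * y k) ^ z := by
        refine Finset.sum_le_sum fun i _ => ?_
        exact Real.rpow_le_rpow (hw i) (c3 i) (by linarith)
    _ ≤ ∑ i, ∑ k, c i k * y k ^ z := by
        refine Finset.sum_le_sum fun i _ => ?_
        exact Real.rpow_arith_mean_le_arith_mean_rpow _ _ _ (fun k _ => c0 i k) (c1 i)
          (fun k _ => hy k) hz
    _ = ∑ k, y k ^ z := by
        rw [Finset.sum_comm]
        refine Finset.sum_congr rfl fun k _ => ?_
        rw [← Finset.sum_mul, c2, one_mul]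

lemma mpow_eq (A : Matrix (Fin n) (Fin n) ℂ) (t : ℝ) (ht : 0 < t) :
    mpow A t = cfc (fun x : ℝ => x ^ t) A := by
  rw [mpow]
  congr 1
  ext x
  split_ifs with h
  · rw [h, Real.zero_rpow ht.ne']
  · rfl

lemma rpow_psd (A : Matrix (Fin n) (Fin n) ℂ) (hA : A.PosSemidef) (t : ℝ) :
    (cfc (fun x : ℝ => x ^ t) A).PosSemidef := by
  obtain ⟨l, Q, hQ, -, -, -, hf, hpos⟩ := spec A hA.1
  rw [hf]
  exact posSemidef_sum _ fun k _ => (hQ k).smul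
    (by exact_mod_cast Real.rpow_nonneg (hpos hA k) t)

lemma map_jensen (hΦpos : ∀ X, X.PosSemidef → (Φ X).PosSemidef) (hΦunital : Φ 1 = 1)
    (A : Matrix (Fin n) (Fin n) ℂ) (hA : A.PosSemidef) (p : ℝ) (hp1 : 1 ≤ p) (hp2 : p ≤ 2) :
    (Φ (cfc (fun x : ℝ => x ^ p) A) - cfc (fun x : ℝ => x ^ p) (Φ A)).PosSemidef := by
  obtain ⟨l, Q, hQ, hQ1, -, -, hf, hpos⟩ := spec A hA.1
  have := jensen_aux (fun k => Φ (Q k)) (fun k => hΦpos _ (hQ k))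
    (by rw [← map_sum, hQ1, hΦunital]) l (hpos hA) (Φ A) (hΦpos A hA)
    (by conv_lhs => rw [spec_self hA.1 hf, map_sum]
        simp only [map_smul]) p hp1 hp2
  rw [hf, map_sum]
  simpa only [map_smul] using this

end maps

/-- monotonicity of the α-z-Rényi trace functional
(`α ≥ z ≥ max{1, α/2}`) under a positive unital trace-preserving map fixing `σ`,
for `ρ` with `supp ρ ⊆ supp σ`:
`Tr((σ^{(1−α)/(2z)} Φ(ρ)^{α/z} σ^{(1−α)/(2z)})^z) ≤ Tr((σ^{(1−α)/(2z)} ρ^{α/z} σ^{(1−α)/(2z)})^z)`. -/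
theorem stmt6 {n : ℕ}
    (Φ : Matrix (Fin n) (Fin n) ℂ →ₗ[ℂ] Matrix (Fin n) (Fin n) ℂ)
    (hΦpos : ∀ X, X.PosSemidef → (Φ X).PosSemidef)
    (hΦunital : Φ 1 = 1) (hΦtr : ∀ X, (Φ X).trace = X.trace)
    (σ : Matrix (Fin n) (Fin n) ℂ) (hσ : σ.PosSemidef) (hfix : Φ σ = σ)
    (ρ : Matrix (Fin n) (Fin n) ℂ) (hρ : ρ.PosSemidef)
    (hsupp : ∀ v : Fin n → ℂ, σ *ᵥ v = 0 → ρ *ᵥ v = 0)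
    (α z : ℝ) (hαz : z ≤ α) (hz1 : 1 ≤ z) (hz2 : α / 2 ≤ z) :
    (Matrix.trace (mpow (mpow σ ((1 - α) / (2 * z)) * mpow (Φ ρ) (α / z) *
        mpow σ ((1 - α) / (2 * z))) z)).re
      ≤ (Matrix.trace (mpow (mpow σ ((1 - α) / (2 * z)) * mpow ρ (α / z) *
          mpow σ ((1 - α) / (2 * z))) z)).re := by
  have hz0 : 0 < z := by linarith
  have hp1 : 1 ≤ α / z := by rw [le_div_iff₀ hz0]; linarith
  have hp2 : α / z ≤ 2 := by rw [div_le_iff₀ hz0]; linarith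
  have hp0 : 0 < α / z := by linarith
  rw [mpow_eq _ z hz0, mpow_eq _ z hz0, mpow_eq _ _ hp0, mpow_eq _ _ hp0]
  set D := mpow σ ((1 - α) / (2 * z)) with hD
  have hDh : D.IsHermitian := cfc_herm _ _
  have hDf : Φ D = D := map_cfc_fix Φ hΦpos hΦunital hΦtr σ hσ.1 hfix _
  have psd : ∀ X : Matrix (Fin n) (Fin n) ℂ, X.PosSemidef → (D * X * D).PosSemidef := by
    intro X hX
    have := hX.mul_mul_conjTranspose_same D
    rwa [hDh.eq] at this
  refine trace_ineq Φ hΦpos hΦunital hΦtr _ _ (psd _ (rpow_psd _ (hΦpos _ hρ) _))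
    (psd _ (rpow_psd _ hρ _)) ?_ z hz1
  rw [map_conj Φ hΦpos hΦunital hΦtr D hDh hDf, ← sub_mul, ← mul_sub]
  exact psd _ (map_jensen Φ hΦpos hΦunital ρ hρ _ hp1 hp2)
end

section
/- Let f : (0,∞) → ℝ satisfy f(1) = 0 and admit a representation f(x) = d·(x−1) + c·(x−1)² + ∫_{[0,∞)} (x−1)²/(x+s) dλ(s) for all x ∈ (0,∞), where d ∈ ℝ, c ≥ 0 and λ is a positive measure on [0,∞) with ∫ (1+s)^{−1} dλ(s) < ∞ (every operator convex f with f(1) = 0 has such a representation, and then f''(1)/2 = c + ∫ (1+s)^{−1} dλ(s)). Let ρ, σ ∈ M_n(ℂ) be density matrices (positive semidefinite with trace 1). Then ( c + ∫_{[0,∞)} (1+s)^{−1} dλ(s) ) · ‖ρ − σ‖₁² ≤ S_f^{pr}(ρ‖σ), where ‖A‖₁ := Tr √(AᴴA) is the trace norm and S_f^{pr}(ρ‖σ) is the supremum, valued in (−∞,+∞], over all projective measurements (P_x)_{x∈X} on ℂ^n, of Σ_x P_f( Tr(ρP_x), Tr(σP_x) ). -/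
open Matrix MeasureTheory
open scoped ComplexOrder

/-- The trace norm `‖A‖₁ = Tr √(AᴴA)`. -/
noncomputable def traceNorm {n : ℕ} (A : Matrix (Fin n) (Fin n) ℂ) : ℝ :=
  (Matrix.trace (mpow (Aᴴ * A) (1/2))).re

/-- A projective measurement on `ℂ^n`: a finite family of mutually orthogonal
orthogonal projections summing to the identity. -/
def IsProjMeas {n k : ℕ} (P : Fin k → Matrix (Fin n) (Fin n) ℂ) : Prop :=
  (∀ x, (P x).IsHermitian) ∧ (∀ x, P x * P x = P x) ∧
    (∀ x y, x ≠ y → P x * P y = 0) ∧ ∑ x, P x = 1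

/-- The extended-real-valued perspective of `f : (0,∞) → ℝ` on `[0,∞)²`:
`P_f(p,q) = q·f(p/q)` for `p,q > 0`, `P_f(0,q) = q·f(0⁺)`, `P_f(p,0) = p·f'(∞)`,
`P_f(0,0) = 0`, where `f(0⁺)` and `f'(∞)` are the limits at `0⁺` and `∞`
(realized here as `limsup`s, which agree with the limits whenever they exist). -/
noncomputable def persp (f : ℝ → ℝ) (p q : ℝ) : EReal :=
  if p = 0 ∧ q = 0 then 0
  else if q = 0 then (p : EReal) *
    Filter.limsup (fun x : ℝ => ((f x / x : ℝ) : EReal)) Filter.atTop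
  else if p = 0 then (q : EReal) *
    Filter.limsup (fun x : ℝ => ((f x : ℝ) : EReal)) (nhdsWithin 0 (Set.Ioi 0))
  else ((q * f (p / q) : ℝ) : EReal)

section helpers

lemma aux_ae (lam : Measure ℝ) (hlam : lam (Set.Iio (0 : ℝ)) = 0) : ∀ᵐ s ∂lam, 0 ≤ s := by
  rw [ae_iff]
  convert hlam using 2
  ext s; simp

lemma aux_int (lam : Measure ℝ) (hlam : lam (Set.Iio (0 : ℝ)) = 0)
    (hint : Integrable (fun s : ℝ => (1 + s)⁻¹) lam) (g : ℝ → ℝ) (hg : Measurable g) (C : ℝ)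
    (hC : ∀ s, 0 ≤ s → |g s| ≤ C * (1 + s)⁻¹) : Integrable g lam := by
  refine Integrable.mono' (hint.const_mul C) hg.aestronglyMeasurable ?_
  filter_upwards [aux_ae lam hlam] with s hs
  exact hC s hs

/-- polynomial lower bound -/
noncomputable def GG (d K A B p q : ℝ) : ℝ :=
  d * (p - q) + (p - q) ^ 2 * (4 * (K - (p * A + q * B)))

lemma aux_pt (p q s : ℝ) (hp : 0 < p) (hq : 0 < q) (hs : 0 ≤ s) :
    4 * (1 + s)⁻¹ - 4 * p * ((1 + s)⁻¹) ^ 2 - 4 * q * (s * ((1 + s)⁻¹) ^ 2) ≤ (p + s * q)⁻¹ := by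
  have ha : 0 < p + s * q := by positivity
  have h1 : 0 < 1 + s := by positivity
  have : (p + s * q)⁻¹ - (4 * (1 + s)⁻¹ - 4 * p * ((1 + s)⁻¹) ^ 2 - 4 * q * (s * ((1 + s)⁻¹) ^ 2))
      = (p + s * q) * ((p + s * q)⁻¹ - 2 * (1 + s)⁻¹) ^ 2 := by
    field_simp
    ring
  nlinarith [mul_nonneg ha.le (sq_nonneg ((p + s * q)⁻¹ - 2 * (1 + s)⁻¹))]

lemma aux_pos (f : ℝ → ℝ) (d c : ℝ) (hc : 0 ≤ c)
    (lam : Measure ℝ) (hlam : lam (Set.Iio (0 : ℝ)) = 0)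
    (hint : Integrable (fun s : ℝ => (1 + s)⁻¹) lam)
    (hrep : ∀ x : ℝ, 0 < x →
      f x = d * (x - 1) + c * (x - 1) ^ 2 + ∫ s, (x - 1) ^ 2 / (x + s) ∂lam)
    (p q : ℝ) (hp : 0 < p) (hq : 0 < q) :
    GG d (c + ∫ s, (1 + s)⁻¹ ∂lam) (∫ s, ((1 + s)⁻¹) ^ 2 ∂lam)
      (c + ∫ s, s * ((1 + s)⁻¹) ^ 2 ∂lam) p q ≤ q * f (p / q) := by
  have hA : Integrable (fun s : ℝ => ((1 + s)⁻¹) ^ 2) lam := by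
    refine aux_int lam hlam hint _ (by fun_prop) 1 ?_
    intro s hs
    rw [abs_of_nonneg (by positivity), one_mul, pow_two]
    exact mul_le_of_le_one_left (by positivity) (inv_le_one_of_one_le₀ (by linarith))
  have hB : Integrable (fun s : ℝ => s * ((1 + s)⁻¹) ^ 2) lam := by
    refine aux_int lam hlam hint _ (by fun_prop) 1 ?_
    intro s hs
    rw [abs_of_nonneg (by positivity), one_mul, pow_two, ← mul_assoc]
    refine mul_le_of_le_one_left (by positivity) ?_
    rw [← div_eq_mul_inv, div_le_one (by positivity)]
    linarith
  have hI : Integrable (fun s : ℝ => (p + s * q)⁻¹) lam := by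
    refine aux_int lam hlam hint _ (by fun_prop) (p⁻¹ + q⁻¹) ?_
    intro s hs
    rw [abs_of_nonneg (by positivity)]
    rw [inv_le_iff_one_le_mul₀ (by positivity)]
    have : (p⁻¹ + q⁻¹) * (1 + s)⁻¹ * (p + s * q) = 1 + (1 + s)⁻¹ * (p⁻¹ * (s * q) + q⁻¹ * p) := by
      field_simp
      ring
    rw [this]
    have : 0 ≤ (1 + s)⁻¹ * (p⁻¹ * (s * q) + q⁻¹ * p) := by positivity
    linarith
  have hle : 4 * (∫ s, (1 + s)⁻¹ ∂lam) - 4 * p * (∫ s, ((1 + s)⁻¹) ^ 2 ∂lam)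
      - 4 * q * (∫ s, s * ((1 + s)⁻¹) ^ 2 ∂lam) ≤ ∫ s, (p + s * q)⁻¹ ∂lam := by
    rw [← integral_const_mul, ← integral_const_mul, ← integral_const_mul,
      ← integral_sub (hint.const_mul _) (hA.const_mul _),
      ← integral_sub (f := fun s => 4 * (1 + s)⁻¹ - 4 * p * ((1 + s)⁻¹) ^ 2)
        ((hint.const_mul _).sub (hA.const_mul _)) (hB.const_mul _)]
    refine integral_mono_ae (((hint.const_mul _).sub (hA.const_mul _)).sub (hB.const_mul _)) hI ?_
    filter_upwards [aux_ae lam hlam] with s hs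
    exact aux_pt p q s hp hq hs
  have hfe : ∫ s, (p / q - 1) ^ 2 / (p / q + s) ∂lam
      = (p - q) ^ 2 / q * ∫ s, (p + s * q)⁻¹ ∂lam := by
    rw [← integral_const_mul]
    refine integral_congr_ae ?_
    filter_upwards [aux_ae lam hlam] with s hs
    have : 0 < p + s * q := by positivity
    have : 0 < p / q + s := by positivity
    field_simp
  rw [hrep _ (by positivity), hfe]
  have e : q * (d * (p / q - 1) + c * (p / q - 1) ^ 2
      + (p - q) ^ 2 / q * ∫ s, (p + s * q)⁻¹ ∂lam)
      = d * (p - q) + (p - q) ^ 2 * (c * q⁻¹ + ∫ s, (p + s * q)⁻¹ ∂lam) := by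
    field_simp
    ring
  rw [e]
  unfold GG
  have hq4 : 4 - 4 * q ≤ q⁻¹ := by
    have : q⁻¹ - (4 - 4 * q) = q * (q⁻¹ - 2) ^ 2 := by field_simp; ring
    nlinarith [mul_nonneg hq.le (sq_nonneg (q⁻¹ - 2))]
  have := mul_le_mul_of_nonneg_left hq4 hc
  have := mul_le_mul_of_nonneg_left (add_le_add this hle) (sq_nonneg (p - q))
  linarith

open Filter Topology in
lemma aux_persp (f : ℝ → ℝ) (d K A B : ℝ)
    (h : ∀ p q : ℝ, 0 < p → 0 < q → GG d K A B p q ≤ q * f (p / q))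
    (p q : ℝ) (hp : 0 ≤ p) (hq : 0 ≤ q) : (GG d K A B p q : EReal) ≤ persp f p q := by
  unfold persp
  split_ifs with h1 h2 h3
  · simp [h1.1, h1.2, GG]
  · subst h2
    have hp : 0 < p := lt_of_le_of_ne hp (fun h => h1 ⟨h.symm, rfl⟩)
    have ht : Tendsto (fun x : ℝ => (((p⁻¹ * GG d K A B p (p * x⁻¹) : ℝ)) : EReal)) atTop
        (𝓝 ((p⁻¹ * GG d K A B p 0 : ℝ) : EReal)) := by
      refine (continuous_coe_real_ereal.tendsto _).comp ?_
      have hc : Continuous (fun y : ℝ => p⁻¹ * GG d K A B p (p * y)) := by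
        unfold GG; fun_prop
      have := (hc.tendsto 0).comp tendsto_inv_atTop_zero
      simpa [Function.comp_def] using this
    have hl : ((p⁻¹ * GG d K A B p 0 : ℝ) : EReal) ≤
        limsup (fun x : ℝ => ((f x / x : ℝ) : EReal)) atTop := by
      rw [← ht.limsup_eq]
      refine limsup_le_limsup ?_
      filter_upwards [eventually_gt_atTop 0] with x hx
      rw [EReal.coe_le_coe_iff]
      have := h p (p * x⁻¹) hp (by positivity)
      have e : p / (p * x⁻¹) = x := by field_simp
      rw [e] at this
      rw [inv_mul_le_iff₀ hp]
      calc _ ≤ _ := this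
        _ = _ := by ring
    calc (GG d K A B p 0 : EReal) = (p : EReal) * ((p⁻¹ * GG d K A B p 0 : ℝ) : EReal) := by
          rw [← EReal.coe_mul, mul_inv_cancel_left₀ hp.ne']
      _ ≤ _ := mul_le_mul_of_nonneg_left hl (by exact_mod_cast hp.le)
  · subst h3
    have hq : 0 < q := lt_of_le_of_ne hq (fun h => h2 h.symm)
    have ht : Tendsto (fun x : ℝ => (((q⁻¹ * GG d K A B (q * x) q : ℝ)) : EReal)) (𝓝[>] 0)
        (𝓝 ((q⁻¹ * GG d K A B 0 q : ℝ) : EReal)) := by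
      refine (continuous_coe_real_ereal.tendsto _).comp ?_
      have hc : Continuous (fun y : ℝ => q⁻¹ * GG d K A B (q * y) q) := by
        unfold GG; fun_prop
      have := (hc.tendsto 0).mono_left (nhdsWithin_le_nhds (s := Set.Ioi 0))
      simpa using this
    have hl : ((q⁻¹ * GG d K A B 0 q : ℝ) : EReal) ≤
        limsup (fun x : ℝ => ((f x : ℝ) : EReal)) (𝓝[>] 0) := by
      rw [← ht.limsup_eq]
      refine limsup_le_limsup ?_
      filter_upwards [self_mem_nhdsWithin] with x hx
      have hx : 0 < x := hx
      rw [EReal.coe_le_coe_iff]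
      have := h (q * x) q (by positivity) hq
      rw [mul_div_cancel_left₀ _ hq.ne'] at this
      rwa [inv_mul_le_iff₀ hq]
    calc (GG d K A B 0 q : EReal) = (q : EReal) * ((q⁻¹ * GG d K A B 0 q : ℝ) : EReal) := by
          rw [← EReal.coe_mul, mul_inv_cancel_left₀ hq.ne']
      _ ≤ _ := mul_le_mul_of_nonneg_left hl (by exact_mod_cast hq.le)
  · rw [EReal.coe_le_coe_iff]
    exact h p q (lt_of_le_of_ne hp (Ne.symm h3)) (lt_of_le_of_ne hq (Ne.symm h2))

lemma aux_proj {n : ℕ} (A : Matrix (Fin n) (Fin n) ℂ) (hA : A.IsHermitian) (ht : A.trace = 0) :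
    ∃ P : Matrix (Fin n) (Fin n) ℂ, P.IsHermitian ∧ P * P = P ∧
      traceNorm A = 2 * (Matrix.trace (A * P)).re := by
  have hsa : IsSelfAdjoint A := hA
  have hcont : ∀ g : ℝ → ℝ, ContinuousOn g (spectrum ℝ A) := fun g =>
    (Matrix.finite_real_spectrum (A := A)).continuousOn g
  refine ⟨cfc (fun x : ℝ => if 0 < x then (1 : ℝ) else 0) A, ?_, ?_, ?_⟩
  · exact (cfc_predicate (fun x : ℝ => if 0 < x then (1 : ℝ) else 0) A : IsSelfAdjoint _)
  · rw [← cfc_mul _ _ A (hcont _) (hcont _)]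
    congr 1
    ext x
    split_ifs <;> simp
  · have e1 : A * cfc (fun x : ℝ => if 0 < x then (1 : ℝ) else 0) A
        = cfc (fun x : ℝ => x * if 0 < x then (1 : ℝ) else 0) A := by
      rw [cfc_mul _ _ A (hcont _) (hcont _), cfc_id' ℝ A]
    have e2 : Aᴴ * A = cfc (fun x : ℝ => x ^ 2) A := by
      rw [cfc_pow_id (R := ℝ) A 2, hA.eq, pow_two]
    have e3 : mpow (Aᴴ * A) (1/2) + A = (2 : ℝ) • (A * cfc (fun x : ℝ => if 0 < x then (1 : ℝ) else 0) A) := by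
      unfold mpow
      rw [e1, e2, ← cfc_comp' (fun x : ℝ => if x = 0 then 0 else x ^ (1/2 : ℝ)) (fun x : ℝ => x ^ 2) A
        (((Matrix.finite_real_spectrum (A := A)).image _).continuousOn _) (hcont _),
        ← cfc_smul (2 : ℝ) _ A (hcont _)]
      conv_lhs => rw [← cfc_id' ℝ A]
      rw [cfc_id' ℝ A]
      nth_rewrite 2 [← cfc_id' ℝ A]
      rw [← cfc_add A _ _ (hcont _) (hcont _)]
      congr 1
      ext x
      have : (if x ^ 2 = 0 then 0 else (x ^ 2) ^ (1/2 : ℝ)) = |x| := by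
        split_ifs with h
        · simp at h; simp [h]
        · rw [← Real.sqrt_eq_rpow, Real.sqrt_sq_eq_abs]
      rw [this]
      split_ifs with h
      · rw [abs_of_pos h]; simp; ring
      · rw [abs_of_nonpos (not_lt.mp h)]; simp
    have := congrArg (fun M => (Matrix.trace M).re) e3
    simp only [Matrix.trace_add, ht, add_zero, Matrix.trace_smul, Complex.smul_re] at this
    unfold traceNorm
    rw [this, smul_eq_mul]

lemma aux_nonneg {n : ℕ} (ρ P : Matrix (Fin n) (Fin n) ℂ) (hρ : ρ.PosSemidef)
    (hP : P.IsHermitian) (hPP : P * P = P) : 0 ≤ (Matrix.trace (ρ * P)).re := by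
  have h : (Pᴴ * ρ * P).PosSemidef := hρ.conjTranspose_mul_mul_same P
  have h2 := h.trace_nonneg
  rw [hP.eq, Matrix.mul_assoc, Matrix.trace_mul_comm, Matrix.mul_assoc, hPP] at h2
  exact (Complex.le_def.mp h2).1

end helpers

/-- Pinsker-type inequality for the projectively measured `f`-divergence:
if `f(1) = 0` and `f(x) = d(x−1) + c(x−1)² + ∫ (x−1)²/(x+s) dλ(s)` with `c ≥ 0` and a
positive measure `λ` on `[0,∞)` with `∫ (1+s)⁻¹ dλ < ∞`, then for density matrices
`ρ, σ`, `(c + ∫ (1+s)⁻¹ dλ)·‖ρ − σ‖₁² ≤ S_f^{pr}(ρ‖σ)`. -/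
theorem stmt8 {n : ℕ} (f : ℝ → ℝ) (hf1 : f 1 = 0) (d c : ℝ) (hc : 0 ≤ c)
    (lam : Measure ℝ) (hlam : lam (Set.Iio (0 : ℝ)) = 0)
    (hint : Integrable (fun s : ℝ => (1 + s)⁻¹) lam)
    (hrep : ∀ x : ℝ, 0 < x →
      f x = d * (x - 1) + c * (x - 1) ^ 2 + ∫ s, (x - 1) ^ 2 / (x + s) ∂lam)
    (ρ σ : Matrix (Fin n) (Fin n) ℂ) (hρ : ρ.PosSemidef) (hσ : σ.PosSemidef)
    (hρ1 : ρ.trace = 1) (hσ1 : σ.trace = 1) :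
    (((c + ∫ s, (1 + s)⁻¹ ∂lam) * traceNorm (ρ - σ) ^ 2 : ℝ) : EReal)
      ≤ sSup {r : EReal | ∃ (k : ℕ) (P : Fin k → Matrix (Fin n) (Fin n) ℂ),
          IsProjMeas P ∧
          r = ∑ x, persp f (Matrix.trace (ρ * P x)).re (Matrix.trace (σ * P x)).re} := by
  obtain ⟨P, hP, hPP, htn⟩ := aux_proj (ρ - σ) (hρ.1.sub hσ.1) (by simp [hρ1, hσ1])
  have hQ : (1 - P).IsHermitian := Matrix.isHermitian_one.sub hP
  have hQQ : (1 - P) * (1 - P) = 1 - P := by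
    simp [Matrix.mul_sub, Matrix.sub_mul, hPP]
  have hPQ : P * (1 - P) = 0 := by simp [Matrix.mul_sub, hPP]
  have hQP : (1 - P) * P = 0 := by simp [Matrix.sub_mul, hPP]
  refine le_trans ?_ (le_sSup ⟨2, ![P, 1 - P], ⟨?_, ?_, ?_, ?_⟩, rfl⟩)
  · rw [Fin.sum_univ_two]
    simp only [Matrix.cons_val_zero, Matrix.cons_val_one]
    have key := aux_persp f d _ _ _ (aux_pos f d c hc lam hlam hint hrep)
    refine le_trans ?_ (add_le_add
      (key _ _ (aux_nonneg ρ P hρ hP hPP) (aux_nonneg σ P hσ hP hPP))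
      (key _ _ (aux_nonneg ρ _ hρ hQ hQQ) (aux_nonneg σ _ hσ hQ hQQ)))
    rw [← EReal.coe_add, EReal.coe_le_coe_iff, htn]
    have hAB : ∫ s, (1 + s)⁻¹ ∂lam
        = (∫ s, ((1 + s)⁻¹) ^ 2 ∂lam) + ∫ s, s * ((1 + s)⁻¹) ^ 2 ∂lam := by
      have hA : Integrable (fun s : ℝ => ((1 + s)⁻¹) ^ 2) lam := by
        refine aux_int lam hlam hint _ (by fun_prop) 1 ?_
        intro s hs
        rw [abs_of_nonneg (by positivity), one_mul, pow_two]
        exact mul_le_of_le_one_left (by positivity) (inv_le_one_of_one_le₀ (by linarith))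
      have hB : Integrable (fun s : ℝ => s * ((1 + s)⁻¹) ^ 2) lam := by
        refine aux_int lam hlam hint _ (by fun_prop) 1 ?_
        intro s hs
        rw [abs_of_nonneg (by positivity), one_mul, pow_two, ← mul_assoc]
        refine mul_le_of_le_one_left (by positivity) ?_
        rw [← div_eq_mul_inv, div_le_one (by positivity)]
        linarith
      rw [← integral_add hA hB]
      refine integral_congr_ae ?_
      filter_upwards [aux_ae lam hlam] with s hs
      have : 0 < 1 + s := by positivity
      field_simp
    simp only [Matrix.mul_sub, Matrix.sub_mul, Matrix.trace_sub, mul_one, hρ1, hσ1,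
      Complex.sub_re, Complex.one_re]
    rw [hAB]
    unfold GG
    apply le_of_eq
    ring
  · intro x; fin_cases x
    · exact hP
    · exact hQ
  · intro x; fin_cases x
    · exact hPP
    · exact hQQ
  · intro x y hxy
    fin_cases x <;> fin_cases y
    · exact absurd rfl hxy
    · exact hPQ
    · exact hQP
    · exact absurd rfl hxy
  · rw [Fin.sum_univ_two]; simp
end

section
/- Let f : (0,∞) → ℝ be operator convex, let Φ : M_n(ℂ) → M_m(ℂ) be a positive linear map, and let ρ, σ ∈ M_n(ℂ) be positive definite such that Φ(ρ) and Φ(σ) are positive definite. Then the operator perspective is monotone under Φ: Φ(σ)^{1/2} f( Φ(σ)^{−1/2} Φ(ρ) Φ(σ)^{−1/2} ) Φ(σ)^{1/2} ≤ Φ( σ^{1/2} f( σ^{−1/2} ρ σ^{−1/2} ) σ^{1/2} ) in the Loewner order, i.e., P_f(Φ(ρ), Φ(σ)) ≤ Φ(P_f(ρ, σ)). -/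
open Matrix
open scoped ComplexOrder

/-- `f : (0,∞) → ℝ` is operator convex. -/
def OperatorConvexOn (f : ℝ → ℝ) : Prop :=
  ∀ (m : ℕ) (A B : Matrix (Fin m) (Fin m) ℂ), A.PosDef → B.PosDef →
    ∀ t : ℝ, 0 ≤ t → t ≤ 1 →
      (t • cfc f A + (1 - t) • cfc f B - cfc f (t • A + (1 - t) • B)).PosSemidef

/-- The operator perspective `P_f(A, B) = B^{1/2} f(B^{-1/2} A B^{-1/2}) B^{1/2}`. -/
noncomputable def perspM {n : ℕ} (f : ℝ → ℝ) (A B : Matrix (Fin n) (Fin n) ℂ) :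
    Matrix (Fin n) (Fin n) ℂ :=
  mpow B (1/2) * cfc f (mpow B (-(1/2)) * A * mpow B (-(1/2))) * mpow B (1/2)
lemma aux_cfc_eq {p : ℕ} (f : ℝ → ℝ) {A : Matrix (Fin p) (Fin p) ℂ} (hA : A.IsHermitian) :
    cfc f A = (hA.eigenvectorUnitary : Matrix (Fin p) (Fin p) ℂ) *
      diagonal (fun i => ((f (hA.eigenvalues i) : ℝ) : ℂ)) *
      (hA.eigenvectorUnitary : Matrix (Fin p) (Fin p) ℂ)ᴴ := by
  rw [hA.cfc_eq, Matrix.IsHermitian.cfc, Unitary.conjStarAlgAut_apply]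
  rfl

lemma aux_cfc_id {p : ℕ} {A : Matrix (Fin p) (Fin p) ℂ} (hA : A.IsHermitian) :
    A = (hA.eigenvectorUnitary : Matrix (Fin p) (Fin p) ℂ) *
      diagonal (fun i => ((hA.eigenvalues i : ℝ) : ℂ)) *
      (hA.eigenvectorUnitary : Matrix (Fin p) (Fin p) ℂ)ᴴ := by
  rw [← aux_cfc_eq (fun x => x) hA]
  exact (cfc_id' ℝ A hA.isSelfAdjoint).symm

lemma aux_unit {p : ℕ} {A : Matrix (Fin p) (Fin p) ℂ} (hA : A.IsHermitian) :
    (hA.eigenvectorUnitary : Matrix (Fin p) (Fin p) ℂ)ᴴ * hA.eigenvectorUnitary = 1 :=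
  Unitary.coe_star_mul_self hA.eigenvectorUnitary

lemma aux_unit' {p : ℕ} {A : Matrix (Fin p) (Fin p) ℂ} (hA : A.IsHermitian) :
    (hA.eigenvectorUnitary : Matrix (Fin p) (Fin p) ℂ) *
      (hA.eigenvectorUnitary : Matrix (Fin p) (Fin p) ℂ)ᴴ = 1 :=
  Unitary.coe_mul_star_self hA.eigenvectorUnitary

lemma aux_diag {p q : ℕ} (f : ℝ → ℝ) (a : Fin p → ℝ) (b : Fin q → ℝ)
    (Y : Matrix (Fin p) (Fin q) ℂ)
    (h : diagonal (fun i => (a i : ℂ)) * Y = Y * diagonal (fun i => (b i : ℂ))) :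
    diagonal (fun i => (f (a i) : ℂ)) * Y = Y * diagonal (fun i => (f (b i) : ℂ)) := by
  ext i j
  have := congrFun (congrFun h i) j
  simp only [diagonal_mul, mul_diagonal] at this ⊢
  by_cases hY : Y i j = 0
  · simp [hY]
  · have h2 : (a i : ℂ) = b j := by
      rw [mul_comm] at this
      exact mul_left_cancel₀ hY this
    have h3 : a i = b j := by exact_mod_cast h2
    rw [h3, mul_comm]

lemma aux_intertwine {p q : ℕ} (f : ℝ → ℝ) {A : Matrix (Fin p) (Fin p) ℂ}
    {B : Matrix (Fin q) (Fin q) ℂ} (hA : A.IsHermitian) (hB : B.IsHermitian)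
    (Z : Matrix (Fin p) (Fin q) ℂ) (h : A * Z = Z * B) : cfc f A * Z = Z * cfc f B := by
  have key := aux_diag f hA.eigenvalues hB.eigenvalues
    ((hA.eigenvectorUnitary : Matrix (Fin p) (Fin p) ℂ)ᴴ * Z *
      (hB.eigenvectorUnitary : Matrix (Fin q) (Fin q) ℂ))
  rw [aux_cfc_eq f hA, aux_cfc_eq f hB]
  have hA' := aux_cfc_id hA
  have hB' := aux_cfc_id hB
  have u1 := aux_unit hA
  have u2 := aux_unit' hA
  have v1 := aux_unit hB
  have v2 := aux_unit' hB
  generalize (hA.eigenvectorUnitary : Matrix (Fin p) (Fin p) ℂ) = U at *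
  generalize (hB.eigenvectorUnitary : Matrix (Fin q) (Fin q) ℂ) = W at *
  generalize diagonal (fun i => ((hA.eigenvalues i : ℝ) : ℂ)) = DA at *
  generalize diagonal (fun i => ((hB.eigenvalues i : ℝ) : ℂ)) = DB at *
  generalize diagonal (fun i => ((f (hA.eigenvalues i) : ℝ) : ℂ)) = FA at *
  generalize diagonal (fun i => ((f (hB.eigenvalues i) : ℝ) : ℂ)) = FB at *
  have k := key (by
    calc DA * (Uᴴ * Z * W) = (Uᴴ * U) * DA * Uᴴ * Z * W := by rw [u1]; simp [Matrix.mul_assoc]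
      _ = Uᴴ * ((U * DA * Uᴴ) * Z) * W := by simp only [Matrix.mul_assoc]
      _ = Uᴴ * (Z * (W * DB * Wᴴ)) * W := by rw [← hA', h, ← hB']
      _ = Uᴴ * Z * W * DB * (Wᴴ * W) := by simp only [Matrix.mul_assoc]
      _ = _ := by rw [v1, Matrix.mul_one])
  calc U * FA * Uᴴ * Z = U * FA * Uᴴ * Z * (W * Wᴴ) := by rw [v2, Matrix.mul_one]
    _ = U * (FA * (Uᴴ * Z * W)) * Wᴴ := by simp only [Matrix.mul_assoc]
    _ = U * (Uᴴ * Z * W * FB) * Wᴴ := by rw [k]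
    _ = (U * Uᴴ) * Z * (W * FB * Wᴴ) := by simp only [Matrix.mul_assoc]
    _ = _ := by rw [u2, Matrix.one_mul]

/-- Hansen–Pedersen–Jensen inequality for an isometry. -/
lemma aux_jensen {k m : ℕ} (f : ℝ → ℝ) (hf : OperatorConvexOn f)
    (V : Matrix (Fin k) (Fin m) ℂ) (hV : Vᴴ * V = 1) (D : Matrix (Fin k) (Fin k) ℂ)
    (hD : D.PosDef) : (Vᴴ * cfc f D * V - cfc f (Vᴴ * D * V)).PosSemidef := by
  set S : Matrix (Fin k) (Fin k) ℂ := (2 : ℂ) • (V * Vᴴ) - 1 with hS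
  have hSH : Sᴴ = S := by
    simp [hS, conjTranspose_sub, conjTranspose_smul, conjTranspose_mul]
  have hSV : S * V = V := by
    rw [hS, Matrix.sub_mul, Matrix.smul_mul, Matrix.mul_assoc, hV, Matrix.mul_one, Matrix.one_mul,
      two_smul, add_sub_cancel_right]
  have hVS : Vᴴ * S = Vᴴ := by
    have := congrArg conjTranspose hSV
    rwa [conjTranspose_mul, hSH] at this
  have hSS : S * S = 1 := by
    conv_lhs => rw [hS]
    rw [← hS, Matrix.sub_mul, Matrix.smul_mul, Matrix.mul_assoc, hVS, Matrix.one_mul, hS,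
      sub_sub_cancel]
  have hE : (S * D * S).PosDef := by
    have := hD.conjTranspose_mul_mul_same (B := S) (by
      intro x y hxy
      have := congrArg (S *ᵥ ·) hxy
      simpa [Matrix.mulVec_mulVec, hSS] using this)
    rwa [hSH] at this
  have hcE : cfc f (S * D * S) = S * cfc f D * S := by
    have := aux_intertwine f hE.1 hD.1 S (by rw [Matrix.mul_assoc, hSS, Matrix.mul_one])
    rw [← this, Matrix.mul_assoc (cfc f _), hSS, Matrix.mul_one]
  have hc := hf k D (S * D * S) hD hE (1/2) (by norm_num) (by norm_num)
  set M := ((1/2 : ℝ) • D + (1 - 1/2 : ℝ) • (S * D * S)) with hM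
  have hMH : M.IsHermitian := by
    unfold Matrix.IsHermitian
    rw [hM, conjTranspose_add, conjTranspose_smul, conjTranspose_smul, hD.1.eq, hE.1.eq]
    simp
  have hHm : (Vᴴ * D * V).IsHermitian := by
    unfold Matrix.IsHermitian
    simp [conjTranspose_mul, hD.1.eq, Matrix.mul_assoc]
  have hMV : M * V = V * (Vᴴ * D * V) := by
    have e1 : S * D * S * V = (2:ℝ) • (V * (Vᴴ * D * V)) - D * V := by
      rw [Matrix.mul_assoc, hSV, Matrix.mul_assoc, hS, Matrix.sub_mul, Matrix.one_mul]
      simp only [Matrix.mul_assoc, two_smul, Matrix.add_mul]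
    rw [hM, Matrix.add_mul, Matrix.smul_mul, Matrix.smul_mul, e1]
    module
  have hfM := aux_intertwine f hMH hHm V hMV
  have h2 := hc.conjTranspose_mul_mul_same V
  convert h2 using 1
  rw [Matrix.mul_sub, Matrix.sub_mul, Matrix.mul_assoc Vᴴ (cfc f M), hfM, ← Matrix.mul_assoc Vᴴ V,
    hV, Matrix.one_mul, hcE, Matrix.mul_add, Matrix.add_mul]
  have e2 : Vᴴ * (S * cfc f D * S) * V = Vᴴ * cfc f D * V := by
    calc _ = (Vᴴ * S) * cfc f D * (S * V) := by simp only [Matrix.mul_assoc]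
      _ = _ := by rw [hVS, hSV]
  rw [Matrix.mul_smul, Matrix.mul_smul, Matrix.smul_mul, Matrix.smul_mul, e2]
  congr 1
  module

lemma aux_mpow_herm {n : ℕ} (A : Matrix (Fin n) (Fin n) ℂ) (t : ℝ) : (mpow A t)ᴴ = mpow A t :=
  (cfc_predicate _ A : IsSelfAdjoint _)

lemma aux_mpow_mul {n : ℕ} {A : Matrix (Fin n) (Fin n) ℂ} (hA : A.PosDef) (s t : ℝ) :
    mpow A s * mpow A t = mpow A (s + t) := by
  unfold mpow
  rw [aux_cfc_eq _ hA.1, aux_cfc_eq _ hA.1, aux_cfc_eq _ hA.1]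
  have u := aux_unit hA.1
  have e : ∀ U W a b : Matrix (Fin n) (Fin n) ℂ, W * U = 1 →
      U * a * W * (U * b * W) = U * (a * b) * W := by
    intro U W a b h
    calc _ = U * a * (W * U) * b * W := by simp only [Matrix.mul_assoc]
      _ = _ := by rw [h, Matrix.mul_one, Matrix.mul_assoc U]
  rw [e _ _ _ _ u, diagonal_mul_diagonal]
  congr 3
  ext i
  have hp := hA.eigenvalues_pos i
  rw [if_neg hp.ne', if_neg hp.ne', if_neg hp.ne', Real.rpow_add hp]
  push_cast; rfl

lemma aux_mpow_zero {n : ℕ} {A : Matrix (Fin n) (Fin n) ℂ} (hA : A.PosDef) :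
    mpow A 0 = 1 := by
  unfold mpow
  rw [aux_cfc_eq _ hA.1]
  have : (fun i => (((if hA.1.eigenvalues i = 0 then 0 else hA.1.eigenvalues i ^ (0:ℝ) : ℝ)) : ℂ))
      = fun _ => 1 := by
    ext i
    rw [if_neg (hA.eigenvalues_pos i).ne']; simp
  rw [this, diagonal_one, Matrix.mul_one, aux_unit']

lemma aux_mpow_one {n : ℕ} {A : Matrix (Fin n) (Fin n) ℂ} (hA : A.PosDef) :
    mpow A 1 = A := by
  conv_rhs => rw [aux_cfc_id hA.1]
  unfold mpow
  rw [aux_cfc_eq _ hA.1]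
  congr 3
  ext i
  rw [if_neg (hA.eigenvalues_pos i).ne']; simp

lemma aux_cfc_diagonal {k : ℕ} (f : ℝ → ℝ) (d : Fin k → ℝ) :
    cfc f (diagonal (fun i => (d i : ℂ))) = diagonal (fun i => (f (d i) : ℂ)) := by
  have hd : (diagonal (fun i => (d i : ℂ))).IsHermitian := by
    unfold Matrix.IsHermitian
    rw [diagonal_conjTranspose]; congr 1; ext i; simp
  have u' := aux_unit' hd
  have h := aux_diag f d hd.eigenvalues (hd.eigenvectorUnitary : Matrix (Fin k) (Fin k) ℂ) (by
    have h1 := congrArg (· * (hd.eigenvectorUnitary : Matrix (Fin k) (Fin k) ℂ)) (aux_cfc_id hd)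
    refine h1.trans ?_
    rw [Matrix.mul_assoc, aux_unit, Matrix.mul_one])
  rw [aux_cfc_eq f hd, ← h, Matrix.mul_assoc, u', Matrix.mul_one]

/-- Jensen's inequality for a family of PSD weights. -/
lemma aux_jensen_sum {n m : ℕ} (f : ℝ → ℝ) (hf : OperatorConvexOn f)
    (x : Fin n → ℝ) (hx : ∀ i, 0 < x i) (B : Fin n → Matrix (Fin m) (Fin m) ℂ)
    (hB : ∑ i, (B i)ᴴ * B i = 1) :
    (∑ i, (f (x i) : ℂ) • ((B i)ᴴ * B i) -
      cfc f (∑ i, (x i : ℂ) • ((B i)ᴴ * B i))).PosSemidef := by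
  let V : Matrix (Fin (n * m)) (Fin m) ℂ := Matrix.of fun k j =>
    B (finProdFinEquiv.symm k).1 (finProdFinEquiv.symm k).2 j
  let d : Fin (n * m) → ℝ := fun k => x (finProdFinEquiv.symm k).1
  have key : ∀ g : ℝ → ℝ, Vᴴ * diagonal (fun k => (g (d k) : ℂ)) * V =
      ∑ i, (g (x i) : ℂ) • ((B i)ᴴ * B i) := by
    intro g
    ext a b
    rw [Matrix.mul_apply, ← finProdFinEquiv.sum_comp, Fintype.sum_prod_type, Matrix.sum_apply]
    refine Finset.sum_congr rfl fun i _ => ?_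
    rw [Matrix.smul_apply, Matrix.mul_apply, Finset.smul_sum]
    refine Finset.sum_congr rfl fun j _ => ?_
    simp only [mul_diagonal, conjTranspose_apply, V, d, Matrix.of_apply, Equiv.symm_apply_apply, smul_eq_mul]
    ring
  have hV : Vᴴ * V = 1 := by
    have := key (fun _ => 1)
    simpa [hB] using this
  have hD : (diagonal (fun k => (d k : ℂ))).PosDef := by
    rw [posDef_diagonal_iff]
    intro i
    exact_mod_cast hx _
  have := aux_jensen f hf V hV _ hD
  rwa [aux_cfc_diagonal, key f, key (fun t => t)] at this

open scoped MatrixOrder in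
lemma aux_psd {m : ℕ} {C : Matrix (Fin m) (Fin m) ℂ} (h : C.PosSemidef) :
    ∃ B : Matrix (Fin m) (Fin m) ℂ, C = Bᴴ * B :=
  CStarAlgebra.nonneg_iff_eq_star_mul_self.mp h.nonneg


/-- monotonicity of the operator perspective of an operator convex `f`
under a positive linear map: `P_f(Φ(ρ), Φ(σ)) ≤ Φ(P_f(ρ, σ))` in the Loewner order,
for positive definite `ρ, σ` with `Φ(ρ), Φ(σ)` positive definite. -/
theorem stmt10 {n m : ℕ} (f : ℝ → ℝ) (hf : OperatorConvexOn f)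
    (Φ : Matrix (Fin n) (Fin n) ℂ →ₗ[ℂ] Matrix (Fin m) (Fin m) ℂ)
    (hΦpos : ∀ X, X.PosSemidef → (Φ X).PosSemidef)
    (ρ σ : Matrix (Fin n) (Fin n) ℂ) (hρ : ρ.PosDef) (hσ : σ.PosDef)
    (hΦρ : (Φ ρ).PosDef) (hΦσ : (Φ σ).PosDef) :
    (Φ (perspM f ρ σ) - perspM f (Φ ρ) (Φ σ)).PosSemidef := by
  unfold perspM
  have qh := aux_mpow_herm σ (1/2)
  have rh := aux_mpow_herm σ (-(1/2))
  have qq : mpow σ (1/2) * mpow σ (1/2) = σ := by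
    rw [aux_mpow_mul hσ, add_halves, aux_mpow_one hσ]
  have qr : mpow σ (1/2) * mpow σ (-(1/2)) = 1 := by
    rw [aux_mpow_mul hσ, add_neg_cancel, aux_mpow_zero hσ]
  have rq : mpow σ (-(1/2)) * mpow σ (1/2) = 1 := by
    rw [aux_mpow_mul hσ, neg_add_cancel, aux_mpow_zero hσ]
  have Qh := aux_mpow_herm (Φ σ) (1/2)
  have Rh := aux_mpow_herm (Φ σ) (-(1/2))
  have QQ : mpow (Φ σ) (1/2) * mpow (Φ σ) (1/2) = Φ σ := by
    rw [aux_mpow_mul hΦσ, add_halves, aux_mpow_one hΦσ]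
  have QR : mpow (Φ σ) (1/2) * mpow (Φ σ) (-(1/2)) = 1 := by
    rw [aux_mpow_mul hΦσ, add_neg_cancel, aux_mpow_zero hΦσ]
  have RQ : mpow (Φ σ) (-(1/2)) * mpow (Φ σ) (1/2) = 1 := by
    rw [aux_mpow_mul hΦσ, neg_add_cancel, aux_mpow_zero hΦσ]
  generalize mpow σ (1/2) = q at *
  generalize mpow σ (-(1/2)) = r at *
  generalize mpow (Φ σ) (1/2) = Q at *
  generalize mpow (Φ σ) (-(1/2)) = R at *
  have hX : (r * ρ * r).PosDef := by
    have := hρ.conjTranspose_mul_mul_same (B := r) (by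
      intro x y hxy
      have := congrArg (q *ᵥ ·) hxy
      simpa [Matrix.mulVec_mulVec, qr] using this)
    rwa [rh] at this
  set X := r * ρ * r with hXdef
  let U : Matrix (Fin n) (Fin n) ℂ := hX.1.eigenvectorUnitary
  let x := hX.1.eigenvalues
  let C : Fin n → Matrix (Fin m) (Fin m) ℂ := fun i =>
    Φ (q * (U * diagonal (Pi.single i 1) * Uᴴ) * q)
  have hC : ∀ i, (C i).PosSemidef := by
    intro i
    apply hΦpos
    have h0 : (diagonal (Pi.single i (1:ℂ)) : Matrix (Fin n) (Fin n) ℂ).PosSemidef := by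
      rw [posSemidef_diagonal_iff]
      intro j
      by_cases h : j = i
      · subst h; simp
      · simp [h]
    have := (h0.mul_mul_conjTranspose_same U).mul_mul_conjTranspose_same q
    rwa [qh] at this
  have hg : ∀ g : ℝ → ℝ, Φ (q * cfc g X * q) = ∑ i, (g (x i) : ℂ) • C i := by
    intro g
    have : diagonal (fun i => (g (x i) : ℂ)) =
        ∑ i, (g (x i) : ℂ) • (diagonal (Pi.single i 1) : Matrix (Fin n) (Fin n) ℂ) := by
      ext a b
      rw [Matrix.sum_apply]
      by_cases h : a = b
      · subst h; simp [Pi.single_apply]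
      · simp [h]
    rw [aux_cfc_eq g hX.1]
    change Φ (q * (U * diagonal (fun i => (g (x i) : ℂ)) * Uᴴ) * q) = _
    rw [this]
    simp only [Matrix.mul_sum, Matrix.sum_mul, Matrix.mul_smul, Matrix.smul_mul, map_sum, map_smul,
      C]
  have hB : ∀ i, ∃ B : Matrix (Fin m) (Fin m) ℂ, C i = Bᴴ * B := fun i =>
    aux_psd (hC i)
  choose B hB using hB
  have hBR : ∀ i, (B i * R)ᴴ * (B i * R) = R * C i * R := by
    intro i
    rw [conjTranspose_mul, Rh, hB]; simp only [Matrix.mul_assoc]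
  have hsum : ∀ g : ℝ → ℝ, ∑ i, (g (x i) : ℂ) • ((B i * R)ᴴ * (B i * R)) =
      R * Φ (q * cfc g X * q) * R := by
    intro g
    rw [hg]
    simp only [hBR, Matrix.mul_sum, Matrix.sum_mul, Matrix.mul_smul, Matrix.smul_mul]
  have h1 : ∑ i, (B i * R)ᴴ * (B i * R) = 1 := by
    have := hsum (fun _ => 1)
    rw [cfc_const_one ℝ X hX.1.isSelfAdjoint, Matrix.mul_one, qq, ← QQ] at this
    simp only [Complex.ofReal_one, one_smul] at this
    rw [this]
    calc R * (Q * Q) * R = (R * Q) * (Q * R) := by simp only [Matrix.mul_assoc]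
      _ = 1 := by rw [RQ, QR, Matrix.mul_one]
  have hid : ∑ i, (x i : ℂ) • ((B i * R)ᴴ * (B i * R)) = R * Φ ρ * R := by
    have := hsum (fun t => t)
    rw [this, cfc_id' ℝ X hX.1.isSelfAdjoint]
    congr 3
    calc q * (r * ρ * r) * q = (q * r) * ρ * (r * q) := by simp only [Matrix.mul_assoc]
      _ = ρ := by rw [qr, rq, Matrix.mul_one, Matrix.one_mul]
  have hJ := aux_jensen_sum f hf x hX.eigenvalues_pos (fun i => B i * R) h1
  rw [hid, hsum f] at hJ
  have hJ2 := hJ.mul_mul_conjTranspose_same Q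
  rw [Qh, Matrix.mul_sub, Matrix.sub_mul] at hJ2
  have : Q * (R * Φ (q * cfc f X * q) * R) * Q = Φ (q * cfc f X * q) := by
    calc _ = (Q * R) * Φ (q * cfc f X * q) * (R * Q) := by simp only [Matrix.mul_assoc]
      _ = _ := by rw [QR, RQ, Matrix.mul_one, Matrix.one_mul]
  rwa [this] at hJ2
end

section
/- Let f : [0,∞) → ℝ be continuous and operator convex on (0,∞), and let ρ, σ ∈ M_n(ℂ) be positive semidefinite with supp ρ ⊆ supp σ. Let (K_j) be any sequence of positive semidefinite matrices with K_j → 0 such that ρ + K_j and σ + K_j are positive definite for every j. Then (σ+K_j)^{1/2} f( (σ+K_j)^{−1/2} (ρ+K_j) (σ+K_j)^{−1/2} ) (σ+K_j)^{1/2} converges, as j → ∞, to σ^{1/2} f( σ^{−1/2} ρ σ^{−1/2} ) σ^{1/2}, where σ^{−1/2} is the Moore–Penrose inverse square root of σ (inverting only the nonzero eigenvalues of σ^{1/2}). -/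
open Matrix Filter
open scoped ComplexOrder

section aux
open scoped Matrix.Norms.L2Operator MatrixOrder

lemma aux_semiconj {n : ℕ} (f : ℝ → ℝ) (A B P : Matrix (Fin n) (Fin n) ℂ)
    (hA : IsSelfAdjoint A) (hB : IsSelfAdjoint B) (h : P * B = A * P) :
    P * cfc f B = cfc f A * P := by
  classical
  have hfA := A.finite_real_spectrum
  have hfB := B.finite_real_spectrum
  set s : Finset ℝ := hfA.toFinset ∪ hfB.toFinset with hs
  set q := Lagrange.interpolate s id f with hq
  have hqe : ∀ x ∈ s, q.eval x = f x := fun x hx =>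
    Lagrange.eval_interpolate_at_node (v := id) f (Function.injective_id.injOn) hx
  have e1 : cfc f A = Polynomial.aeval A q := by
    rw [← cfc_polynomial q A]
    exact cfc_congr fun x hx => (hqe x (by simp [hs, hx])).symm
  have e2 : cfc f B = Polynomial.aeval B q := by
    rw [← cfc_polynomial q B]
    exact cfc_congr fun x hx => (hqe x (by simp [hs, hx])).symm
  rw [e1, e2]
  clear_value q
  clear hqe e1 e2 hq
  induction q using Polynomial.induction_on' with
  | add p q hp hq => simp [mul_add, add_mul, hp, hq]
  | monomial k a =>
    have : SemiconjBy P B A := h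
    have := this.pow_right k
    simp only [Polynomial.aeval_monomial, ← Algebra.smul_def, mul_smul_comm, smul_mul_assoc]
    rw [this.eq]

lemma aux_sa {n : ℕ} (A : Matrix (Fin n) (Fin n) ℂ) (t : ℝ) : IsSelfAdjoint (mpow A t) :=
  cfc_predicate _ _

lemma aux_contOn {n : ℕ} (A : Matrix (Fin n) (Fin n) ℂ) (g : ℝ → ℝ) :
    ContinuousOn g (spectrum ℝ A) := A.finite_real_spectrum.continuousOn g

lemma aux_spec {n : ℕ} {A : Matrix (Fin n) (Fin n) ℂ} (hA : A.PosSemidef) :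
    ∀ x ∈ spectrum ℝ A, 0 ≤ x := fun _ hx => spectrum_nonneg_of_nonneg hA.nonneg hx

lemma aux_SS {n : ℕ} {A : Matrix (Fin n) (Fin n) ℂ} (hA : A.PosSemidef) :
    mpow A (1/2) * mpow A (1/2) = A := by
  have h1 : IsSelfAdjoint A := hA.1
  unfold mpow
  rw [← cfc_mul _ _ A (aux_contOn _ _) (aux_contOn _ _)]
  conv_rhs => rw [← cfc_id' ℝ A]
  refine cfc_congr fun x hx => ?_
  have := aux_spec hA x hx
  split_ifs with h
  · simp [h]
  · rw [← Real.rpow_add (by positivity)]; norm_num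

lemma aux_comm {n : ℕ} (A : Matrix (Fin n) (Fin n) ℂ) (s t : ℝ) :
    mpow A s * mpow A t = mpow A t * mpow A s := by
  unfold mpow
  exact cfc_commute_cfc _ _ _

lemma aux_STS {n : ℕ} {A : Matrix (Fin n) (Fin n) ℂ} (hA : A.PosSemidef) :
    mpow A (1/2) * mpow A (-(1/2)) * mpow A (1/2) = mpow A (1/2) := by
  unfold mpow
  rw [← cfc_mul _ _ A (aux_contOn _ _) (aux_contOn _ _),
   ← cfc_mul _ _ A (aux_contOn _ _) (aux_contOn _ _)]
  refine cfc_congr fun x hx => ?_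
  have := aux_spec hA x hx
  split_ifs with h
  · simp
  · rw [← Real.rpow_add (by positivity)]; norm_num

lemma aux_TST {n : ℕ} {A : Matrix (Fin n) (Fin n) ℂ} (hA : A.PosSemidef) :
    mpow A (-(1/2)) * mpow A (1/2) * mpow A (-(1/2)) = mpow A (-(1/2)) := by
  unfold mpow
  rw [← cfc_mul _ _ A (aux_contOn _ _) (aux_contOn _ _),
   ← cfc_mul _ _ A (aux_contOn _ _) (aux_contOn _ _)]
  refine cfc_congr fun x hx => ?_
  have := aux_spec hA x hx
  split_ifs with h
  · simp
  · rw [← Real.rpow_add (by positivity)]; norm_num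

lemma aux_TS {n : ℕ} {A : Matrix (Fin n) (Fin n) ℂ} (hA : A.PosDef) :
    mpow A (-(1/2)) * mpow A (1/2) = 1 := by
  have h1 : IsSelfAdjoint A := hA.1
  unfold mpow
  rw [← cfc_mul _ _ A (aux_contOn _ _) (aux_contOn _ _), ← cfc_one ℝ A]
  refine cfc_congr fun x hx => ?_
  have := aux_spec hA.posSemidef x hx
  have h0 : x ≠ 0 := by
    rintro rfl
    exact spectrum.zero_notMem ℝ hA.isUnit hx
  rw [if_neg h0, if_neg h0, ← Real.rpow_add (by positivity)]; norm_num

lemma aux_cfc {n : ℕ} (f : ℝ → ℝ) (hcont : ContinuousOn f (Set.Ici (0 : ℝ)))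
    (X : ℕ → Matrix (Fin n) (Fin n) ℂ) (Y : Matrix (Fin n) (Fin n) ℂ)
    (hX : ∀ j, (X j).PosSemidef) (hY : Y.PosSemidef) (h : Tendsto X atTop (nhds Y)) :
    Tendsto (fun j => cfc f (X j)) atTop (nhds (cfc f Y)) := by
  have hb : ∀ᶠ j in atTop, ‖X j‖ ≤ ‖Y‖ + 1 :=
    (h.norm.eventually_le_const (lt_add_one _))
  have key : ∀ Z : Matrix (Fin n) (Fin n) ℂ, Z.PosSemidef → ‖Z‖ ≤ ‖Y‖ + 1 →
      spectrum ℝ Z ⊆ Set.Icc 0 (‖Y‖ + 1) := by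
    intro Z hZ hn x hx
    refine ⟨aux_spec hZ x hx, ?_⟩
    have := spectrum.norm_le_norm_mul_of_mem hx
    rcases n with _ | n
    · have : Subsingleton (Matrix (Fin 0) (Fin 0) ℂ) := inferInstance
      simp [spectrum.of_subsingleton] at hx
    · rw [norm_one, mul_one] at this
      exact (le_abs_self x).trans (this.trans hn)
  refine h.cfc isCompact_Icc f (hb.mono fun j hj => key _ (hX j) hj)
    (.of_forall fun j => (hX j).1) (key _ hY (by linarith)) hY.1
    (hcont.mono fun x hx => hx.1)

lemma aux_sqrt {n : ℕ} 
    (X : ℕ → Matrix (Fin n) (Fin n) ℂ) (Y : Matrix (Fin n) (Fin n) ℂ)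
    (hX : ∀ j, (X j).PosSemidef) (hY : Y.PosSemidef) (h : Tendsto X atTop (nhds Y)) :
    Tendsto (fun j => mpow (X j) (1/2)) atTop (nhds (mpow Y (1/2))) := by
  refine aux_cfc _ ?_ X Y hX hY h
  refine Real.continuous_sqrt.continuousOn.congr fun x hx => ?_
  dsimp only
  split_ifs with h
  · simp [h]
  · rw [Real.sqrt_eq_rpow]

lemma aux_Z {n : ℕ} (σ : Matrix (Fin n) (Fin n) ℂ) (hσ : σ.PosSemidef)
    (K : ℕ → Matrix (Fin n) (Fin n) ℂ) (hK : ∀ j, (K j).PosSemidef)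
    (hKlim : Tendsto K atTop (nhds 0)) (hpd : ∀ j, (σ + K j).PosDef) :
    Tendsto (fun j => mpow (σ + K j) (-(1/2)) * mpow σ (1/2)) atTop
      (nhds (mpow σ (-(1/2)) * mpow σ (1/2))) := by
  have hlim : Tendsto (fun j => σ + K j) atTop (nhds σ) := by
    simpa using hKlim.const_add σ
  have hS := aux_sqrt _ _ (fun j => (hpd j).posSemidef) hσ hlim
  set S := mpow σ (1/2) with hSdef
  set T := mpow σ (-(1/2)) with hTdef
  have hSs : star S = S := aux_sa _ _
  have hTs : star T = T := aux_sa _ _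
  have hST : S * T = T * S := aux_comm _ _ _
  have hSTS : S * T * S = S := aux_STS hσ
  have hSS : S * S = σ := aux_SS hσ
  set Z : ℕ → Matrix (Fin n) (Fin n) ℂ := fun j => mpow (σ + K j) (-(1/2)) * S with hZ
  have hPs : star (T * S) = T * S := by rw [star_mul, hSs, hTs, hST]
  have hPP : (T * S) * (T * S) = T * S := by
    rw [mul_assoc, ← mul_assoc S, hSTS]
  have hSP : S * (T * S) = S := by rw [← mul_assoc, hSTS]
  have hZ1 : ∀ j, ‖Z j‖ ≤ 1 := by
    intro j
    have hts : star (mpow (σ + K j) (-(1/2))) = mpow (σ + K j) (-(1/2)) := aux_sa _ _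
    have h1 : Z j * star (Z j) ≤ 1 := by
      have h2 : Z j * star (Z j) = mpow (σ + K j) (-(1/2)) * σ * mpow (σ + K j) (-(1/2)) := by
        simp only [hZ, star_mul, hSs, hts]
        rw [← hSS]; noncomm_ring
      have h3 : (1 : Matrix (Fin n) (Fin n) ℂ) =
          mpow (σ + K j) (-(1/2)) * (σ + K j) * mpow (σ + K j) (-(1/2)) := by
        have h4 := aux_SS (hpd j).posSemidef
        have h5 := aux_TS (hpd j)
        have h6 := aux_comm (σ + K j) (1/2) (-(1/2))
        rw [h5] at h6
        calc (1 : Matrix (Fin n) (Fin n) ℂ) = (mpow (σ + K j) (-(1/2)) * mpow (σ + K j) (1/2)) *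
              (mpow (σ + K j) (1/2) * mpow (σ + K j) (-(1/2))) := by rw [h5, h6, one_mul]
          _ = mpow (σ + K j) (-(1/2)) * (mpow (σ + K j) (1/2) * mpow (σ + K j) (1/2)) *
              mpow (σ + K j) (-(1/2)) := by noncomm_ring
          _ = _ := by rw [h4]
      rw [h2, h3]
      exact IsSelfAdjoint.conjugate_le_conjugate
        (le_add_of_nonneg_right (hK j).nonneg) hts
    have h7 : ‖Z j * star (Z j)‖ ≤ 1 :=
      (CStarAlgebra.norm_le_one_iff_of_nonneg _ (mul_star_self_nonneg _)).2 h1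
    rw [CStarRing.norm_self_mul_star] at h7
    nlinarith [norm_nonneg (Z j)]
  have hZZ : ∀ j, star (Z j) * Z j ≤ T * S := by
    intro j
    have h1 : star (Z j) * Z j ≤ 1 := by
      rw [← CStarAlgebra.norm_le_one_iff_of_nonneg _ (star_mul_self_nonneg _),
        CStarRing.norm_star_mul_self]
      nlinarith [norm_nonneg (Z j), hZ1 j]
    have h2 := IsSelfAdjoint.conjugate_le_conjugate h1 hPs
    rw [mul_one, hPP] at h2
    have h3 : Z j * (T * S) = Z j := by simp only [hZ]; rw [mul_assoc, hSP]
    have h4 : (T * S) * star (Z j) = star (Z j) := by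
      rw [← hPs, ← star_mul, h3]
    rwa [← mul_assoc (T * S) (star (Z j)), h4, mul_assoc, h3] at h2
  -- `P Z → P`
  have hPZ : Tendsto (fun j => T * S * Z j) atTop (nhds (T * S)) := by
    have e : ∀ j, T * S * Z j = T * S + T * ((S - mpow (σ + K j) (1/2)) * Z j) := by
      intro j
      have h6 := aux_comm (σ + K j) (1/2) (-(1/2))
      rw [aux_TS (hpd j)] at h6
      have : mpow (σ + K j) (1/2) * Z j = S := by
        simp only [hZ]; rw [← mul_assoc, h6, one_mul]
      rw [sub_mul, this]; noncomm_ring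
    have h0 : Tendsto (fun j => (S - mpow (σ + K j) (1/2)) * Z j) atTop (nhds 0) := by
      have hd : Tendsto (fun j => ‖S - mpow (σ + K j) (1/2)‖) atTop (nhds 0) := by
        simpa using (hS.const_sub S).norm
      refine squeeze_zero_norm (fun j => ?_) hd
      refine (norm_mul_le _ _).trans ?_
      exact mul_le_of_le_one_right (norm_nonneg _) (hZ1 j)
    simp_rw [e]
    simpa using (h0.const_mul T).const_add (T * S)
  have hPZ' : Tendsto (fun j => star (Z j) * (T * S)) atTop (nhds (T * S)) := by
    have := hPZ.star
    simpa only [star_mul _ (Z _), hPs] using this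
  have hB : Tendsto (fun j => ‖T * S - star (Z j) * (T * S) - T * S * Z j + T * S‖) atTop
      (nhds 0) := by
    simpa using (((hPZ'.const_sub (T * S)).sub hPZ).add_const (T * S)).norm
  have hsq : Tendsto (fun j => ‖Z j - T * S‖ * ‖Z j - T * S‖) atTop (nhds 0) := by
    refine squeeze_zero (fun j => by positivity) (fun j => ?_) hB
    rw [← CStarRing.norm_star_mul_self]
    refine CStarAlgebra.norm_le_norm_of_nonneg_of_le (star_mul_self_nonneg _) ?_
    have : star (Z j - T * S) * (Z j - T * S) =
        star (Z j) * Z j - star (Z j) * (T * S) - T * S * Z j + T * S := by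
      rw [star_sub, hPs, sub_mul, mul_sub, mul_sub, hPP]; abel
    rw [this]
    gcongr
    exact hZZ j
  rw [tendsto_iff_norm_sub_tendsto_zero]
  have := hsq.sqrt
  simpa using this

lemma aux_main {n : ℕ} (f : ℝ → ℝ) (hcont : ContinuousOn f (Set.Ici (0 : ℝ)))
    (ρ σ : Matrix (Fin n) (Fin n) ℂ)
    (hρ : ρ.PosSemidef) (hσ : σ.PosSemidef)
    (hsupp : ∀ v : Fin n → ℂ, σ *ᵥ v = 0 → ρ *ᵥ v = 0)
    (K : ℕ → Matrix (Fin n) (Fin n) ℂ) (hK : ∀ j, (K j).PosSemidef)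
    (hKlim : Filter.Tendsto K Filter.atTop (nhds 0))
    (hpd : ∀ j, (ρ + K j).PosDef ∧ (σ + K j).PosDef) :
    Filter.Tendsto
      (fun j =>
        mpow (σ + K j) (1/2) *
          cfc f (mpow (σ + K j) (-(1/2)) * (ρ + K j) * mpow (σ + K j) (-(1/2))) *
          mpow (σ + K j) (1/2))
      Filter.atTop
      (nhds (mpow σ (1/2) *
        cfc f (mpow σ (-(1/2)) * ρ * mpow σ (-(1/2))) * mpow σ (1/2))) := by
  have hlim : Tendsto (fun j => σ + K j) atTop (nhds σ) := by
    simpa using hKlim.const_add σ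
  have hSl := aux_sqrt _ _ (fun j => (hpd j).2.posSemidef) hσ hlim
  have hZ := aux_Z σ hσ K hK hKlim (fun j => (hpd j).2)
  set S := mpow σ (1/2) with hSdef
  set T := mpow σ (-(1/2)) with hTdef
  have hSs : star S = S := aux_sa _ _
  have hTs : star T = T := aux_sa _ _
  have hST : S * T = T * S := aux_comm _ _ _
  have hSTS : S * T * S = S := aux_STS hσ
  have hTST : T * S * T = T := aux_TST hσ
  have hSS : S * S = σ := aux_SS hσ
  set P := T * S with hP
  have hPs : star P = P := by rw [hP, star_mul, hSs, hTs, hST]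
  have hPP : P * P = P := by
    rw [hP, mul_assoc, ← mul_assoc S, hSTS]
  have hSP : S * P = S := by rw [hP, ← mul_assoc, hSTS]
  have hPS : P * S = S := by rw [← hST, hSTS]
  have hTP : T * P = T := by rw [← hST, ← mul_assoc, ← hP, hTST]
  have hσP : σ * P = σ := by rw [← hSS, mul_assoc, hSP]
  have hρP : ρ * P = ρ := by
    have h1 : σ * (1 - P) = 0 := by rw [mul_sub, hσP, mul_one, sub_self]
    have h2 : ρ * (1 - P) = 0 := by
      ext i k
      have := hsupp (fun l => (1 - P) l k) (by
        ext l
        exact congrFun (congrFun h1 l) k)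
      exact congrFun this i
    rw [mul_sub, mul_one, sub_eq_zero] at h2
    exact h2.symm
  have hρs : star ρ = ρ := hρ.1
  have hσs : star σ = σ := hσ.1
  have hPρ : P * ρ = ρ := by rw [← hPs, ← hρs, ← star_mul, hρP]
  have hPσ : P * σ = σ := by rw [← hPs, ← hσs, ← star_mul, hσP]
  have hTσT : T * σ * T = P := by
    rw [← hSS, show T * (S * S) * T = T * S * (S * T) by noncomm_ring, hST, ← hP, hPP]
  -- the arguments of `f`
  have hX : ∀ j, mpow (σ + K j) (-(1/2)) * (ρ + K j) * mpow (σ + K j) (-(1/2)) =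
      1 + (mpow (σ + K j) (-(1/2)) * S) * (T * (ρ - σ) * T) *
        star (mpow (σ + K j) (-(1/2)) * S) := by
    intro j
    have hts : star (mpow (σ + K j) (-(1/2))) = mpow (σ + K j) (-(1/2)) := aux_sa _ _
    have h4 := aux_SS (hpd j).2.posSemidef
    have h5 := aux_TS (hpd j).2
    have h6 := aux_comm (σ + K j) (1/2) (-(1/2))
    rw [h5] at h6
    have h3 : mpow (σ + K j) (-(1/2)) * (σ + K j) * mpow (σ + K j) (-(1/2)) = 1 := by
      calc _ = mpow (σ + K j) (-(1/2)) * (mpow (σ + K j) (1/2) * mpow (σ + K j) (1/2)) *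
              mpow (σ + K j) (-(1/2)) := by rw [h4]
        _ = (mpow (σ + K j) (-(1/2)) * mpow (σ + K j) (1/2)) *
              (mpow (σ + K j) (1/2) * mpow (σ + K j) (-(1/2))) := by noncomm_ring
        _ = _ := by rw [h5, h6, one_mul]
    have h7 : S * (T * (ρ - σ) * T) * S = ρ - σ := by
      rw [show S * (T * (ρ - σ) * T) * S = (S * T) * (ρ - σ) * (T * S) by noncomm_ring,
        hST, ← hP, mul_sub, sub_mul, hPρ, hPσ, hρP, hσP]
    generalize mpow (σ + K j) (-(1/2)) = t at *
    rw [star_mul, hSs, hts]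
    calc t * (ρ + K j) * t = t * (σ + K j) * t + t * (ρ - σ) * t := by noncomm_ring
      _ = 1 + t * (S * (T * (ρ - σ) * T) * S) * t := by rw [h3, h7]
      _ = _ := by noncomm_ring
  set X0 := T * ρ * T with hX0
  have hX0s : star X0 = X0 := by rw [hX0, star_mul, star_mul, hTs, hρs, mul_assoc]
  have hX0P : X0 * P = X0 := by rw [hX0, mul_assoc, hTP]
  have hPX0 : P * X0 = X0 := by rw [← hPs, ← hX0s, ← star_mul, hX0P]
  have hXl : Tendsto (fun j => mpow (σ + K j) (-(1/2)) * (ρ + K j) * mpow (σ + K j) (-(1/2)))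
      atTop (nhds (X0 + (1 - P))) := by
    simp_rw [hX]
    have := ((hZ.mul_const (T * (ρ - σ) * T)).mul hZ.star).const_add 1
    convert this using 2
    rw [hPs, mul_sub, sub_mul, hTσT, mul_sub, sub_mul, hPP, hPP, ← hX0, hPX0, hX0P]
    abel
  have hXpos : ∀ j, (mpow (σ + K j) (-(1/2)) * (ρ + K j) * mpow (σ + K j) (-(1/2))).PosSemidef := by
    intro j
    have hts : star (mpow (σ + K j) (-(1/2))) = mpow (σ + K j) (-(1/2)) := aux_sa _ _
    have := star_right_conjugate_nonneg (hpd j).1.posSemidef.nonneg (mpow (σ + K j) (-(1/2)))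
    rw [hts] at this
    exact this.posSemidef
  have hX0pos : 0 ≤ X0 := by
    have := star_right_conjugate_nonneg hρ.nonneg T
    rwa [hTs] at this
  have hQpos : 0 ≤ 1 - P := by
    have := star_mul_self_nonneg (1 - P)
    rwa [star_sub, star_one, hPs, sub_mul, mul_sub, mul_sub, hPP, one_mul, mul_one, sub_self,
      sub_zero, one_mul]
      at this
  have hB : (X0 + (1 - P)).PosSemidef := (add_nonneg hX0pos hQpos).posSemidef
  have hf := aux_cfc f hcont _ _ hXpos hB hXl
  have hfin := (hSl.mul hf).mul hSl
  convert hfin using 2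
  have hsc := aux_semiconj f X0 (X0 + (1 - P)) P hX0s hB.1 (by
    rw [mul_add, mul_sub, hPP, mul_one, sub_self, add_zero, hPX0, hX0P])
  calc S * cfc f X0 * S = S * (cfc f X0 * P) * S := by
        rw [mul_assoc S (cfc f X0 * P), mul_assoc (cfc f X0), hPS, mul_assoc]
    _ = (S * P) * cfc f (X0 + (1 - P)) * S := by rw [← hsc]; noncomm_ring
    _ = _ := by rw [hSP]

end aux

/-- for `f` continuous on `[0,∞)` and operator convex on `(0,∞)`, and
positive semidefinite `ρ, σ` with `supp ρ ⊆ supp σ`, the perturbed operator perspectives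
`P_f(ρ+K_j, σ+K_j)` converge to `σ^{1/2} f(σ^{-1/2} ρ σ^{-1/2}) σ^{1/2}` along any
sequence of positive semidefinite perturbations `K_j → 0` keeping both arguments
positive definite. -/
theorem stmt12 {n : ℕ} (f : ℝ → ℝ) (hcont : ContinuousOn f (Set.Ici (0 : ℝ)))
    (hf : OperatorConvexOn f) (ρ σ : Matrix (Fin n) (Fin n) ℂ)
    (hρ : ρ.PosSemidef) (hσ : σ.PosSemidef)
    (hsupp : ∀ v : Fin n → ℂ, σ *ᵥ v = 0 → ρ *ᵥ v = 0)
    (K : ℕ → Matrix (Fin n) (Fin n) ℂ) (hK : ∀ j, (K j).PosSemidef)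
    (hKlim : Filter.Tendsto K Filter.atTop (nhds 0))
    (hpd : ∀ j, (ρ + K j).PosDef ∧ (σ + K j).PosDef) :
    Filter.Tendsto
      (fun j =>
        mpow (σ + K j) (1/2) *
          cfc f (mpow (σ + K j) (-(1/2)) * (ρ + K j) * mpow (σ + K j) (-(1/2))) *
          mpow (σ + K j) (1/2))
      Filter.atTop
      (nhds (mpow σ (1/2) *
        cfc f (mpow σ (-(1/2)) * ρ * mpow σ (-(1/2))) * mpow σ (1/2))) := by
  exact aux_main f hcont ρ σ hρ hσ hsupp K hK hKlim hpd
end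

section
/- Let Φ : M_n(ℂ) → M_n(ℂ) be a positive, unital, trace-preserving linear map, let X ∈ M_n(ℂ) be Hermitian, and let f be a convex real function on an interval containing all eigenvalues of X (the eigenvalues of Φ(X) then automatically lie in this interval). Then Tr f(Φ(X)) ≤ Tr f(X). Moreover, if f is strictly convex on this interval, then equality Tr f(Φ(X)) = Tr f(X) holds if and only if there exists a unitary U ∈ M_n(ℂ) with Φ(X) = U X Uᴴ. -/
open Matrix
open scoped ComplexOrder

lemma stmt16_trace_cfc {n : ℕ} {A : Matrix (Fin n) (Fin n) ℂ} (hA : A.IsHermitian) (f : ℝ → ℝ) :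
    (Matrix.trace (cfc f A)).re = ∑ i, f (hA.eigenvalues i) := by
  rw [hA.cfc_eq f, Matrix.IsHermitian.cfc, Unitary.conjStarAlgAut_apply, Matrix.trace_mul_comm,
    ← mul_assoc]
  simp [Matrix.trace]

lemma stmt16_spec {n : ℕ} {A : Matrix (Fin n) (Fin n) ℂ} (hA : A.IsHermitian) :
    ∃ V : Matrix (Fin n) (Fin n) ℂ, V * Vᴴ = 1 ∧ Vᴴ * V = 1 ∧
      A = V * diagonal (fun i => (hA.eigenvalues i : ℂ)) * Vᴴ := by
  refine ⟨hA.eigenvectorUnitary, ?_, ?_, ?_⟩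
  · exact Unitary.coe_mul_star_self hA.eigenvectorUnitary
  · exact Unitary.coe_star_mul_self hA.eigenvectorUnitary
  · have := hA.spectral_theorem
    rw [Unitary.conjStarAlgAut_apply] at this
    exact this

lemma stmt16_sum_diag {n : ℕ} (V : Matrix (Fin n) (Fin n) ℂ) (d : Fin n → ℂ) :
    ∑ j, d j • (V * diagonal (Pi.single j 1) * Vᴴ) = V * diagonal d * Vᴴ := by
  have : diagonal d = ∑ j, d j • diagonal (Pi.single j (1:ℂ)) := by
    ext a b
    simp only [Matrix.sum_apply, Matrix.smul_apply, diagonal_apply, smul_eq_mul, Pi.single_apply]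
    by_cases h : a = b <;> simp [h]
  rw [this, Matrix.mul_sum, Matrix.sum_mul]
  simp

lemma stmt16_key {n : ℕ}
    (Φ : Matrix (Fin n) (Fin n) ℂ →ₗ[ℂ] Matrix (Fin n) (Fin n) ℂ)
    (hΦpos : ∀ X, X.PosSemidef → (Φ X).PosSemidef)
    (hΦunital : Φ 1 = 1) (hΦtr : ∀ X, (Φ X).trace = X.trace)
    (X : Matrix (Fin n) (Fin n) ℂ) (hX : X.IsHermitian) :
    ∃ hY : (Φ X).IsHermitian, ∃ S : Fin n → Fin n → ℝ, (∀ i j, 0 ≤ S i j) ∧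
      (∀ i, ∑ j, S i j = 1) ∧ (∀ j, ∑ i, S i j = 1) ∧
      ∀ i, ∑ j, S i j * hX.eigenvalues j = hY.eigenvalues i := by
  obtain ⟨V, hV1, hV2, hVX⟩ := stmt16_spec hX
  set P : Fin n → Matrix (Fin n) (Fin n) ℂ := fun j => V * diagonal (Pi.single j 1) * Vᴴ with hP
  have hPpos : ∀ j, (P j).PosSemidef := fun j => by
    refine (PosSemidef.diagonal ?_).mul_mul_conjTranspose_same V
    intro i
    by_cases h : i = j
    · subst h; simp
    · simp [h]
  have hPtr : ∀ j, (P j).trace = 1 := fun j => by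
    rw [hP]
    simp only
    rw [Matrix.trace_mul_comm, ← mul_assoc, hV2, one_mul]
    simp [Matrix.trace]
  have hP1 : ∑ j, P j = 1 := by
    have := stmt16_sum_diag V (fun _ => 1)
    simpa [hV1] using this
  have hPX : ∑ j, (hX.eigenvalues j : ℂ) • P j = X := by
    rw [stmt16_sum_diag V, ← hVX]
  have hΦX : Φ X = ∑ j, (hX.eigenvalues j : ℂ) • Φ (P j) := by
    conv_lhs => rw [← hPX]
    simp
  have hY : (Φ X).IsHermitian := by
    rw [hΦX, Matrix.IsHermitian, Matrix.conjTranspose_sum]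
    refine Finset.sum_congr rfl fun j _ => ?_
    rw [Matrix.conjTranspose_smul, (hΦpos _ (hPpos j)).1.eq]
    simp
  obtain ⟨W, hW1, hW2, hWY⟩ := stmt16_spec hY
  have hB : ∀ j, (Wᴴ * Φ (P j) * W).PosSemidef := fun j =>
    (hΦpos _ (hPpos j)).conjTranspose_mul_mul_same W
  refine ⟨hY, fun i j => ((Wᴴ * Φ (P j) * W) i i).re, ?_, ?_, ?_, ?_⟩
  · intro i j
    exact (Complex.le_def.1 ((hB j).diag_nonneg (i := i))).1
  · intro i
    rw [← Complex.re_sum, ← Matrix.sum_apply, ← Matrix.sum_mul, ← Matrix.mul_sum, ← map_sum, hP1,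
      hΦunital, mul_one, hW2]
    simp
  · intro j
    have : (Wᴴ * Φ (P j) * W).trace = 1 := by
      rw [Matrix.trace_mul_comm, ← mul_assoc, hW1, one_mul, hΦtr, hPtr]
    rw [← Complex.re_sum]
    have h2 := congrArg Complex.re this
    simpa [Matrix.trace] using h2
  · intro i
    have h1 : Wᴴ * Φ X * W = diagonal (fun i => (hY.eigenvalues i : ℂ)) := by
      conv_lhs => rw [hWY]
      calc _ = (Wᴴ * W) * diagonal (fun i => (hY.eigenvalues i : ℂ)) * (Wᴴ * W) := by
            simp only [mul_assoc]
        _ = _ := by rw [hW2]; simp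
    have h2 : Wᴴ * Φ X * W = ∑ j, (hX.eigenvalues j : ℂ) • (Wᴴ * Φ (P j) * W) := by
      rw [hΦX, Matrix.mul_sum, Matrix.sum_mul]
      simp
    have h3 := congrArg Complex.re (congrFun (congrFun (h1.symm.trans h2) i) i)
    rw [Matrix.sum_apply, Complex.re_sum] at h3
    simp only [diagonal_apply_eq, Complex.ofReal_re, Matrix.smul_apply, smul_eq_mul,
      Complex.re_ofReal_mul] at h3
    rw [h3]
    exact Finset.sum_congr rfl fun j _ => mul_comm _ _

lemma stmt16_charpoly {n : ℕ} {A B : Matrix (Fin n) (Fin n) ℂ} (hA : A.IsHermitian)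
    (hB : B.IsHermitian) (h : ∀ g : ℝ → ℝ, ∑ i, g (hA.eigenvalues i) = ∑ i, g (hB.eigenvalues i)) :
    hA.eigenvalues = hB.eigenvalues := by
  rw [hA.eigenvalues_eq_eigenvalues_iff hB, hA.charpoly_eq, hB.charpoly_eq]
  have hm : Finset.univ.val.map hA.eigenvalues = Finset.univ.val.map hB.eigenvalues := by
    ext c
    have := h (fun x => if c = x then 1 else 0)
    simp only [Finset.sum_boole, Nat.cast_inj] at this
    rw [Multiset.count_map, Multiset.count_map]
    exact this
  have := congrArg (fun m : Multiset ℝ =>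
    (m.map fun x : ℝ => (Polynomial.X - Polynomial.C (x : ℂ))).prod) hm
  simpa [Multiset.map_map, Finset.prod, Function.comp_def] using this

/-- for a positive unital trace-preserving (bistochastic) map `Φ`, a
Hermitian `X`, and `f` convex on a convex set (interval) `s ⊆ ℝ` containing the
eigenvalues of `X`, we have `Tr f(Φ(X)) ≤ Tr f(X)`; if moreover `f` is strictly convex
on `s`, equality holds iff `Φ(X) = U X Uᴴ` for some unitary `U`. -/
theorem stmt16 {n : ℕ}
    (Φ : Matrix (Fin n) (Fin n) ℂ →ₗ[ℂ] Matrix (Fin n) (Fin n) ℂ)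
    (hΦpos : ∀ X, X.PosSemidef → (Φ X).PosSemidef)
    (hΦunital : Φ 1 = 1) (hΦtr : ∀ X, (Φ X).trace = X.trace)
    (X : Matrix (Fin n) (Fin n) ℂ) (hX : X.IsHermitian)
    (s : Set ℝ) (hs : Convex ℝ s) (hspec : spectrum ℝ X ⊆ s)
    (f : ℝ → ℝ) (hf : ConvexOn ℝ s f) :
    (Matrix.trace (cfc f (Φ X))).re ≤ (Matrix.trace (cfc f X)).re ∧
      (StrictConvexOn ℝ s f →
        ((Matrix.trace (cfc f (Φ X))).re = (Matrix.trace (cfc f X)).re ↔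
          ∃ U : Matrix (Fin n) (Fin n) ℂ, U ∈ Matrix.unitaryGroup (Fin n) ℂ ∧
            Φ X = U * X * Uᴴ)) := by
  obtain ⟨hY, S, hS0, hS1, hS2, hSe⟩ := stmt16_key Φ hΦpos hΦunital hΦtr X hX
  rw [stmt16_trace_cfc hY, stmt16_trace_cfc hX]
  have hmem : ∀ j, hX.eigenvalues j ∈ s := fun j => hspec (hX.eigenvalues_mem_spectrum_real j)
  have hsum : ∀ g : ℝ → ℝ, ∑ i, ∑ j, S i j * g (hX.eigenvalues j) = ∑ j, g (hX.eigenvalues j) := by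
    intro g
    rw [Finset.sum_comm]
    refine Finset.sum_congr rfl fun j _ => ?_
    rw [← Finset.sum_mul, hS2, one_mul]
  have hJ : ∀ i, f (hY.eigenvalues i) ≤ ∑ j, S i j * f (hX.eigenvalues j) := by
    intro i
    rw [← hSe]
    exact hf.map_sum_le (fun j _ => hS0 i j) (hS1 i) (fun j _ => hmem j)
  refine ⟨?_, fun hsf => ⟨fun heq => ?_, ?_⟩⟩
  · rw [← hsum f]
    exact Finset.sum_le_sum fun i _ => hJ i
  · rw [← hsum f, Finset.sum_eq_sum_iff_of_le fun i _ => hJ i] at heq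
    have hpt : ∀ i j, S i j ≠ 0 → hX.eigenvalues j = hY.eigenvalues i := by
      intro i j hij
      have h1 := heq i (Finset.mem_univ i)
      rw [← hSe] at h1
      have h2 := (hsf.map_sum_eq_iff' (t := Finset.univ) (w := S i) (p := hX.eigenvalues)
        (fun j _ => hS0 i j) (hS1 i) (fun j _ => hmem j)).1 h1 j (Finset.mem_univ j) hij
      rw [h2, ← hSe]
      rfl
    have hev : hY.eigenvalues = hX.eigenvalues := by
      refine stmt16_charpoly hY hX fun g => ?_
      rw [← hsum g]
      refine Finset.sum_congr rfl fun i _ => ?_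
      have : ∀ j, S i j * g (hX.eigenvalues j) = S i j * g (hY.eigenvalues i) := by
        intro j
        by_cases h : S i j = 0
        · simp [h]
        · rw [hpt i j h]
      simp_rw [this]
      rw [← Finset.sum_mul, hS1, one_mul]
    obtain ⟨V, hV1, hV2, hVX⟩ := stmt16_spec hX
    obtain ⟨W, hW1, hW2, hWY⟩ := stmt16_spec hY
    refine ⟨W * Vᴴ, ?_, ?_⟩
    · rw [Matrix.mem_unitaryGroup_iff, Matrix.star_eq_conjTranspose, Matrix.conjTranspose_mul,
        Matrix.conjTranspose_conjTranspose]
      calc _ = W * (Vᴴ * V) * Wᴴ := by simp only [mul_assoc]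
        _ = 1 := by rw [hV2, mul_one, hW1]
    · rw [Matrix.conjTranspose_mul, Matrix.conjTranspose_conjTranspose]
      set D := diagonal (fun i => (hX.eigenvalues i : ℂ)) with hD
      rw [hev] at hWY
      calc Φ X = W * D * Wᴴ := hWY
        _ = W * (Vᴴ * V) * D * (Vᴴ * V) * Wᴴ := by rw [hV2]; simp
        _ = W * Vᴴ * (V * D * Vᴴ) * (V * Wᴴ) := by simp only [mul_assoc]
        _ = _ := by rw [← hVX]
  · rintro ⟨U, hU, hUX⟩
    have : hY.eigenvalues = hX.eigenvalues := by
      rw [hY.eigenvalues_eq_eigenvalues_iff hX, hUX, Matrix.charpoly_mul_comm, ← mul_assoc,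
        ← Matrix.star_eq_conjTranspose, Matrix.mem_unitaryGroup_iff'.1 hU, one_mul]
    rw [this]
end

section
/- Let ρ, σ ∈ M_n(ℂ) be positive semidefinite with supp ρ ⊆ supp σ and ρσ ≠ σρ. Then the Umegaki relative entropy is strictly smaller than the Belavkin–Staszewski relative entropy: Tr( ρ (log ρ − log σ) ) < Tr( ρ · log( ρ^{1/2} σ^{−1} ρ^{1/2} ) ), where σ^{−1} is the Moore–Penrose inverse of σ and, for a positive semidefinite matrix A, log A denotes the Hermitian matrix obtained by applying the logarithm to the nonzero eigenvalues of A and the value 0 to the eigenvalue 0 (so both sides are the usual support-restricted expressions, which are well defined since supp ρ ⊆ supp σ and supp(ρ^{1/2} σ^{−1} ρ^{1/2}) = supp ρ). -/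
open Matrix
open scoped ComplexOrder

/-- The logarithm of a positive semidefinite matrix: apply `log` to the nonzero
eigenvalues and `0` to the eigenvalue `0` (note `Real.log 0 = 0`). -/
noncomputable def mlog {n : ℕ} (A : Matrix (Fin n) (Fin n) ℂ) :
    Matrix (Fin n) (Fin n) ℂ :=
  cfc Real.log A

open Filter Topology in
theorem aux_scalar {ι : Type*} [Fintype ι] (w x : ι → ℝ) (hx : ∀ i, 0 ≤ x i)
    (hwx : ∀ i, w i ≠ 0 → 0 < x i) (hw : ∑ i, w i = 0)
    (h : ∀ s : ℝ, 0 < s → 0 < ∑ i, w i / (x i + s)) :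
    ∑ i, w i * Real.log (x i) < 0 := by
  let F : ℝ → ℝ := fun s => ∑ i, w i * Real.log (s + x i)
  have hmono : StrictMonoOn F (Set.Ici 0) := by
    apply strictMonoOn_of_deriv_pos (convex_Ici 0)
    · apply continuousOn_finsetSum
      intro i _
      by_cases hi : w i = 0
      · simp only [hi, zero_mul]; exact continuousOn_const
      · have := hwx i hi
        apply ContinuousOn.mul continuousOn_const
        apply ContinuousOn.log (by fun_prop)
        intro s hs
        have : (0:ℝ) ≤ s := hs
        positivity
    · intro s hs
      rw [interior_Ici] at hs
      have hs : 0 < s := hs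
      have hd : HasDerivAt F (∑ i, w i / (x i + s)) s := by
        apply HasDerivAt.fun_sum
        intro i _
        have hne : s + x i ≠ 0 := by have := hx i; positivity
        have := (((hasDerivAt_id s).add_const (x i)).log hne).const_mul (w i)
        have e : w i * (1 / (id s + x i)) = w i / (x i + s) := by
          rw [id, add_comm (x i) s]; ring
        rw [e] at this
        exact this
      rw [hd.deriv]; exact h s hs
  have hlim : Tendsto F atTop (𝓝 0) := by
    have h1 : Tendsto (fun s : ℝ => ∑ i, w i * (Real.log (s + x i) - Real.log s)) atTop (𝓝 0) := by
      have : (0:ℝ) = ∑ i, w i * 0 := by simp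
      rw [this]
      apply tendsto_finsetSum
      intro i _
      exact (Real.tendsto_log_comp_add_sub_log (x i)).const_mul (w i)
    refine h1.congr ?_
    intro s
    simp only [F, mul_sub, Finset.sum_sub_distrib, ← Finset.sum_mul, hw]
    simp
  have h01 : F 0 < F 1 := hmono (by simp) (by simp) one_pos
  have h1 : F 1 ≤ 0 := by
    apply ge_of_tendsto hlim
    filter_upwards [eventually_ge_atTop 1] with s hs
    exact hmono.monotoneOn (by simp) (Set.mem_Ici.2 (by linarith)) hs
  have h0 : F 0 = ∑ i, w i * Real.log (x i) := by simp [F]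
  linarith

theorem aux_scalar2 {ι κ : Type*} [Fintype ι] [Fintype κ] (u x : ι → ℝ) (p b : κ → ℝ)
    (hx : ∀ i, 0 ≤ x i) (hux : ∀ i, u i ≠ 0 → 0 < x i)
    (hb : ∀ i, 0 ≤ b i) (hpb : ∀ i, p i ≠ 0 → 0 < b i) (hw : ∑ i, u i = ∑ i, p i)
    (h : ∀ s : ℝ, 0 < s → ∑ i, p i / (b i + s) < ∑ i, u i / (x i + s)) :
    ∑ i, u i * Real.log (x i) < ∑ i, p i * Real.log (b i) := by
  have := aux_scalar (ι := ι ⊕ κ) (Sum.elim u (fun i => - p i)) (Sum.elim x b)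
    (by rintro (i | i) <;> simp [hx, hb])
    (by rintro (i | i) <;> simp <;> [exact hux i; exact hpb i])
    (by simp [hw])
    (by
      intro s hs
      have := h s hs
      simp [neg_div]
      linarith)
  simp at this
  linarith

theorem aux_spec_s17 {n : ℕ} (A : Matrix (Fin n) (Fin n) ℂ) (hA : A.PosSemidef) :
    ∃ (U : Matrix (Fin n) (Fin n) ℂ) (l : Fin n → ℝ), Uᴴ * U = 1 ∧ U * Uᴴ = 1 ∧ (∀ i, 0 ≤ l i) ∧
      A = U * diagonal (fun i => (l i : ℂ)) * Uᴴ ∧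
      ∀ f : ℝ → ℝ, cfc f A = U * diagonal (fun i => (f (l i) : ℂ)) * Uᴴ := by
  have hH := hA.1
  refine ⟨hH.eigenvectorUnitary, hH.eigenvalues, ?_, ?_, hA.eigenvalues_nonneg, ?_, ?_⟩
  · exact Unitary.coe_star_mul_self hH.eigenvectorUnitary
  · exact Unitary.coe_mul_star_self hH.eigenvectorUnitary
  · have := hH.spectral_theorem
    rw [Unitary.conjStarAlgAut_apply] at this
    exact this
  · intro f
    rw [hH.cfc_eq, Matrix.IsHermitian.cfc, Unitary.conjStarAlgAut_apply]
    rfl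

theorem aux_entry {n : ℕ} (A : Matrix (Fin n) (Fin n) ℂ) (k : Fin n) :
    (Aᴴ * A) k k = ((∑ i, ‖A i k‖ ^ 2 : ℝ) : ℂ) := by
  rw [Matrix.mul_apply]
  push_cast
  refine Finset.sum_congr rfl fun i _ => ?_
  rw [conjTranspose_apply]
  exact RCLike.conj_mul (A i k)

theorem aux_core {n : ℕ} (ρ σ M : Matrix (Fin n) (Fin n) ℂ) (t : Fin n → ℝ) (ht : ∀ k, 0 ≤ t k)
    (hρ : ρ = M * diagonal (fun k => (t k : ℂ)) * Mᴴ) (hσ : σ = M * Mᴴ)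
    (hcomm : ρ * σ ≠ σ * ρ) (Y : Matrix (Fin n) (Fin n) ℂ) (s : ℝ) (hs : 0 < s) :
    ∑ k, t k / (t k + s) * ∑ i, ‖M i k‖ ^ 2 <
      (trace (Yᴴ * ρ * Y)).re / s + (trace ((1 - Y) * σ * (1 - Y)ᴴ)).re := by
  set c : Fin n → ℝ := fun k => s / (t k + s) with hc
  set C : Matrix (Fin n) (Fin n) ℂ := diagonal (fun k => (c k : ℂ)) with hC
  have hCH : Cᴴ = C := by
    rw [hC, diagonal_conjTranspose]; congr 1; ext k; simp
  set A := Y * M - M * C with hA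
  set B := Yᴴ * M - M * C with hB
  have hpos : ∀ k, 0 < t k + s := fun k => by have := ht k; positivity
  -- the four expansions
  have eA : ∀ k, (∑ i, ‖A i k‖ ^ 2 : ℝ) = ((Mᴴ * Yᴴ * Y * M) k k).re
      - 2 * c k * ((Mᴴ * Y * M) k k).re + c k ^ 2 * ∑ i, ‖M i k‖ ^ 2 := by
    intro k
    have hconj : ((Mᴴ * Yᴴ * M) k k).re = ((Mᴴ * Y * M) k k).re := by
      have : Mᴴ * Yᴴ * M = (Mᴴ * Y * M)ᴴ := by simp [Matrix.mul_assoc]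
      rw [this, conjTranspose_apply]; simp
    have h1 : Aᴴ * A = Mᴴ * Yᴴ * Y * M - (Mᴴ * Yᴴ * M) * C - C * (Mᴴ * Y * M) + C * (Mᴴ * M) * C := by
      simp only [hA, conjTranspose_sub, conjTranspose_mul, hCH]; noncomm_ring
    have h2 := congrArg Complex.re (aux_entry A k)
    rw [h1] at h2
    simp only [hC, Matrix.add_apply, Matrix.sub_apply, mul_diagonal, diagonal_mul, aux_entry] at h2
    rw [Complex.ofReal_re] at h2
    rw [← h2]
    simp [-Complex.ofReal_sum, hconj]
    ring
  have eB : ∀ k, (∑ i, ‖B i k‖ ^ 2 : ℝ) = ((Mᴴ * Y * Yᴴ * M) k k).re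
      - 2 * c k * ((Mᴴ * Y * M) k k).re + c k ^ 2 * ∑ i, ‖M i k‖ ^ 2 := by
    intro k
    have hconj : ((Mᴴ * Yᴴ * M) k k).re = ((Mᴴ * Y * M) k k).re := by
      have : Mᴴ * Yᴴ * M = (Mᴴ * Y * M)ᴴ := by simp [Matrix.mul_assoc]
      rw [this, conjTranspose_apply]; simp
    have h1 : Bᴴ * B = Mᴴ * Y * Yᴴ * M - (Mᴴ * Y * M) * C - C * (Mᴴ * Yᴴ * M) + C * (Mᴴ * M) * C := by
      simp only [hB, conjTranspose_sub, conjTranspose_mul, hCH, conjTranspose_conjTranspose]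
      noncomm_ring
    have h2 := congrArg Complex.re (aux_entry B k)
    rw [h1] at h2
    simp only [hC, Matrix.add_apply, Matrix.sub_apply, mul_diagonal, diagonal_mul, aux_entry] at h2
    rw [Complex.ofReal_re] at h2
    rw [← h2]
    simp [-Complex.ofReal_sum, hconj]
    ring
  have e1 : (trace (Yᴴ * ρ * Y)).re = ∑ k, t k * ((Mᴴ * Y * Yᴴ * M) k k).re := by
    have : trace (Yᴴ * ρ * Y) = trace (diagonal (fun k => (t k : ℂ)) * (Mᴴ * Y * Yᴴ * M)) := by
      rw [hρ, show Yᴴ * (M * diagonal (fun k => (t k : ℂ)) * Mᴴ) * Y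
        = (Yᴴ * M) * (diagonal (fun k => (t k : ℂ)) * (Mᴴ * Y)) by noncomm_ring, trace_mul_comm]
      congr 1; noncomm_ring
    rw [this, trace]
    simp [diagonal_mul]
  have e2 : (trace ((1 - Y) * σ * (1 - Y)ᴴ)).re = ∑ k, (((Mᴴ * Yᴴ * Y * M) k k).re
      - 2 * ((Mᴴ * Y * M) k k).re + ∑ i, ‖M i k‖ ^ 2) := by
    have h1 : trace ((1 - Y) * σ * (1 - Y)ᴴ) =
        trace (Mᴴ * Yᴴ * Y * M - Mᴴ * Yᴴ * M - Mᴴ * Y * M + Mᴴ * M) := by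
      rw [hσ, show (1 - Y) * (M * Mᴴ) * (1 - Y)ᴴ = ((1 - Y) * M) * (Mᴴ * (1 - Y)ᴴ) by noncomm_ring,
        trace_mul_comm]
      congr 1
      simp only [conjTranspose_sub, conjTranspose_one]
      noncomm_ring
    rw [h1, trace]
    rw [Complex.re_sum]
    refine Finset.sum_congr rfl fun k _ => ?_
    have hconj : ((Mᴴ * Yᴴ * M) k k).re = ((Mᴴ * Y * M) k k).re := by
      have : Mᴴ * Yᴴ * M = (Mᴴ * Y * M)ᴴ := by simp [Matrix.mul_assoc]
      rw [this, conjTranspose_apply]; simp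
    simp only [diag_apply, Matrix.add_apply, Matrix.sub_apply, aux_entry, Complex.add_re,
      Complex.sub_re, Complex.ofReal_re, hconj]
    ring
  have key : (trace (Yᴴ * ρ * Y)).re / s + (trace ((1 - Y) * σ * (1 - Y)ᴴ)).re
      - ∑ k, t k / (t k + s) * ∑ i, ‖M i k‖ ^ 2
      = ∑ k, (t k / s * ∑ i, ‖B i k‖ ^ 2 + ∑ i, ‖A i k‖ ^ 2) := by
    rw [e1, e2, Finset.sum_div, ← Finset.sum_add_distrib, ← Finset.sum_sub_distrib]
    refine Finset.sum_congr rfl fun k _ => ?_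
    rw [eA, eB]
    have := (hpos k).ne'
    simp only [hc]
    field_simp
    ring
  have hnn : ∀ k ∈ Finset.univ, 0 ≤ t k / s * ∑ i, ‖B i k‖ ^ 2 + ∑ i, ‖A i k‖ ^ 2 := by
    intro k _
    have := ht k
    positivity
  rcases (Finset.sum_nonneg hnn).lt_or_eq with h | h
  · linarith
  exfalso
  apply hcomm
  have h0 := (Finset.sum_eq_zero_iff_of_nonneg hnn).1 h.symm
  have hA0 : ∀ i k, A i k = 0 := by
    intro i k
    have h1 := h0 k (Finset.mem_univ k)
    have h2 : 0 ≤ t k / s * ∑ i, ‖B i k‖ ^ 2 := by have := ht k; positivity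
    have h3 : ∑ i, ‖A i k‖ ^ 2 = 0 := le_antisymm (by linarith) (by positivity)
    have := (Finset.sum_eq_zero_iff_of_nonneg (fun i _ => by positivity)).1 h3 i (Finset.mem_univ i)
    simpa using this
  have hB0 : ∀ i k, t k ≠ 0 → B i k = 0 := by
    intro i k hk
    have h1 := h0 k (Finset.mem_univ k)
    have h2 : 0 < t k / s := div_pos ((ht k).lt_of_ne hk.symm) hs
    have h3 : 0 ≤ ∑ i, ‖A i k‖ ^ 2 := by positivity
    have h4 : 0 ≤ ∑ i, ‖B i k‖ ^ 2 := by positivity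
    have h5 : ∑ i, ‖B i k‖ ^ 2 = 0 := by
      by_contra hne
      have := mul_pos h2 (h4.lt_of_ne (Ne.symm hne))
      linarith
    have := (Finset.sum_eq_zero_iff_of_nonneg (fun i _ => by positivity)).1 h5 i (Finset.mem_univ i)
    simpa using this
  have hYM : Y * M = M * C := by
    rw [← sub_eq_zero]; ext i k; exact hA0 i k
  -- orthogonality
  have horth : ∀ k l, t k ≠ 0 → ((c k : ℂ) - c l) * (Mᴴ * M) k l = 0 := by
    intro k l hk
    have hBk : (Bᴴ * M) k l = 0 := by
      rw [Matrix.mul_apply]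
      apply Finset.sum_eq_zero
      intro i _
      rw [conjTranspose_apply, hB0 i k hk]; simp
    have h1 : Bᴴ * M = (Mᴴ * M) * C - C * (Mᴴ * M) := by
      simp only [hB, conjTranspose_sub, conjTranspose_mul, hCH, conjTranspose_conjTranspose,
        Matrix.sub_mul]
      rw [Matrix.mul_assoc, hYM]; noncomm_ring
    rw [h1] at hBk
    simp only [hC, Matrix.sub_apply, mul_diagonal, diagonal_mul] at hBk
    linear_combination -hBk
  have hne : ∀ k l, t k ≠ t l → (c k : ℂ) - c l ≠ 0 := by
    intro k l hkl h
    apply hkl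
    rw [sub_eq_zero] at h
    have h := Complex.ofReal_injective h
    simp only [hc] at h
    have h1 := (hpos k).ne'
    have h2 := (hpos l).ne'
    field_simp at h
    linarith
  have horth2 : ∀ k l, t k ≠ t l → (Mᴴ * M) k l = 0 := by
    intro k l hkl
    by_cases hk : t k = 0
    · have hl : t l ≠ 0 := fun h => hkl (by rw [hk, h])
      have := (mul_eq_zero.1 (horth l k hl)).resolve_left (hne l k hkl.symm)
      have h2 : (Mᴴ * M) k l = star ((Mᴴ * M) l k) := by
        rw [← conjTranspose_apply, conjTranspose_mul, conjTranspose_conjTranspose]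
      rw [h2, this]; simp
    · exact (mul_eq_zero.1 (horth k l hk)).resolve_left (hne k l hkl)
  have hcm : diagonal (fun k => (t k : ℂ)) * (Mᴴ * M) = (Mᴴ * M) * diagonal (fun k => (t k : ℂ)) := by
    ext k l
    rw [mul_diagonal, diagonal_mul]
    by_cases hkl : t k = t l
    · rw [hkl, mul_comm]
    · rw [horth2 k l hkl]; simp
  rw [hρ, hσ]
  calc _ = M * (diagonal (fun k => (t k : ℂ)) * (Mᴴ * M)) * Mᴴ := by noncomm_ring
    _ = _ := by rw [hcm]; noncomm_ring

theorem aux_tr {n : ℕ} (Z : Matrix (Fin n) (Fin n) ℂ) (a b : Fin n → ℝ) :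
    (trace (diagonal (fun i => (a i : ℂ)) * Z * diagonal (fun i => (b i : ℂ)) * Zᴴ)).re
      = ∑ i, ∑ j, a i * b j * ‖Z i j‖ ^ 2 := by
  rw [trace, Complex.re_sum]
  refine Finset.sum_congr rfl fun i _ => ?_
  rw [diag_apply, Matrix.mul_apply, Complex.re_sum]
  refine Finset.sum_congr rfl fun j _ => ?_
  rw [mul_diagonal, diagonal_mul, conjTranspose_apply]
  have : Z i j * star (Z i j) = ((‖Z i j‖ ^ 2 : ℝ) : ℂ) := by
    push_cast; exact RCLike.mul_conj (Z i j)
  rw [show (a i : ℂ) * Z i j * b j * star (Z i j) = a i * b j * (Z i j * star (Z i j)) by ring, this]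
  norm_cast

theorem aux_left {n : ℕ} (W₁ W₂ : Matrix (Fin n) (Fin n) ℂ) (r q : Fin n → ℝ)
    (h1 : W₁ᴴ * W₁ = 1) (h1' : W₁ * W₁ᴴ = 1) (h2 : W₂ᴴ * W₂ = 1) (h2' : W₂ * W₂ᴴ = 1)
    (hr : ∀ i, 0 ≤ r i) (hq : ∀ i, 0 ≤ q i) (s : ℝ) (hs : 0 < s) :
    ∃ Y : Matrix (Fin n) (Fin n) ℂ,
      (trace (Yᴴ * (W₁ * diagonal (fun i => (r i : ℂ)) * W₁ᴴ) * Y)).re / s +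
        (trace ((1 - Y) * (W₂ * diagonal (fun i => (q i : ℂ)) * W₂ᴴ) * (1 - Y)ᴴ)).re
      = ∑ i, ∑ j, r i * q j * ‖(W₁ᴴ * W₂) i j‖ ^ 2 / (r i + s * q j) := by
  set U := W₁ᴴ * W₂ with hU
  let Z : Matrix (Fin n) (Fin n) ℂ := fun i j => ((s * q j / (r i + s * q j) : ℝ) : ℂ) * U i j
  have hYe : 1 - W₁ * Z * W₂ᴴ = W₁ * (U - Z) * W₂ᴴ := by
    have : W₁ * U * W₂ᴴ = 1 := by
      rw [hU, ← Matrix.mul_assoc, h1', Matrix.one_mul, h2']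
    rw [Matrix.mul_sub, Matrix.sub_mul, this]
  refine ⟨W₁ * Z * W₂ᴴ, ?_⟩
  have e1 : trace ((W₁ * Z * W₂ᴴ)ᴴ * (W₁ * diagonal (fun i => (r i : ℂ)) * W₁ᴴ) * (W₁ * Z * W₂ᴴ))
      = trace (diagonal (fun i => (r i : ℂ)) * Z * diagonal (fun _ => ((1:ℝ) : ℂ)) * Zᴴ) := by
    have : (W₁ * Z * W₂ᴴ)ᴴ * (W₁ * diagonal (fun i => (r i : ℂ)) * W₁ᴴ) * (W₁ * Z * W₂ᴴ)
       = (W₂ * Zᴴ) * ((W₁ᴴ * W₁) * diagonal (fun i => (r i : ℂ)) * (W₁ᴴ * W₁) * Z * W₂ᴴ) := by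
      simp only [conjTranspose_mul, conjTranspose_conjTranspose]; noncomm_ring
    rw [this, h1, trace_mul_comm, show (1 * diagonal (fun i => (r i : ℂ)) * 1 * Z * W₂ᴴ) * (W₂ * Zᴴ)
      = diagonal (fun i => (r i : ℂ)) * Z * (W₂ᴴ * W₂) * Zᴴ by noncomm_ring, h2]
    simp
  have e2 : trace ((W₁ * (U - Z) * W₂ᴴ) * (W₂ * diagonal (fun i => (q i : ℂ)) * W₂ᴴ) *
        (W₁ * (U - Z) * W₂ᴴ)ᴴ)
      = trace (diagonal (fun _ => ((1:ℝ) : ℂ)) * (U - Z) * diagonal (fun i => (q i : ℂ)) * (U - Z)ᴴ) := by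
    have : (W₁ * (U - Z) * W₂ᴴ) * (W₂ * diagonal (fun i => (q i : ℂ)) * W₂ᴴ) *
        (W₁ * (U - Z) * W₂ᴴ)ᴴ = W₁ * ((U - Z) * (W₂ᴴ * W₂) * diagonal (fun i => (q i : ℂ)) *
          (W₂ᴴ * W₂) * (U - Z)ᴴ * W₁ᴴ) := by
      rw [conjTranspose_mul, conjTranspose_mul, conjTranspose_conjTranspose]; noncomm_ring
    rw [this, trace_mul_comm, h2, Matrix.mul_assoc _ W₁ᴴ, h1]
    simp
  rw [hYe, e1, e2, aux_tr, aux_tr, Finset.sum_div, ← Finset.sum_add_distrib]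
  refine Finset.sum_congr rfl fun i _ => ?_
  rw [Finset.sum_div, ← Finset.sum_add_distrib]
  refine Finset.sum_congr rfl fun j _ => ?_
  by_cases hd : r i + s * q j = 0
  · have h3 := hr i
    have h4 := mul_nonneg hs.le (hq j)
    have h5 : r i = 0 := by linarith
    have h6 : q j = 0 := by
      have : s * q j = 0 := by linarith
      exact (mul_eq_zero.1 this).resolve_left hs.ne'
    simp [h5, h6]
  · have n1 : ‖Z i j‖ ^ 2 = (s * q j / (r i + s * q j)) ^ 2 * ‖U i j‖ ^ 2 := by
      simp only [Z]; rw [norm_mul, Complex.norm_real, mul_pow, Real.norm_eq_abs, sq_abs]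
    have n2 : ‖(U - Z) i j‖ ^ 2 = (r i / (r i + s * q j)) ^ 2 * ‖U i j‖ ^ 2 := by
      have : (U - Z) i j = ((r i / (r i + s * q j) : ℝ) : ℂ) * U i j := by
        have : (r i / (r i + s * q j) : ℝ) = 1 - s * q j / (r i + s * q j) := by
          field_simp; ring
        rw [this, Matrix.sub_apply]; simp only [Z]; push_cast; ring
      rw [this, norm_mul, Complex.norm_real, mul_pow, Real.norm_eq_abs, sq_abs]
    rw [n1, n2]
    field_simp
    ring

theorem aux_intertwine_s17 {n : ℕ} (K B T : Matrix (Fin n) (Fin n) ℂ) (hB : B.PosSemidef)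
    (hT : T.PosSemidef) (h : K * B = T * K) (f : ℝ → ℝ) : K * cfc f B = cfc f T * K := by
  obtain ⟨W, b, w1, w2, hb, eB, fB⟩ := aux_spec_s17 B hB
  obtain ⟨V, t, v1, v2, ht, eT, fT⟩ := aux_spec_s17 T hT
  rw [fB, fT]
  set L := Vᴴ * K * W with hL
  have hK : K = V * L * Wᴴ := by
    rw [hL, show V * (Vᴴ * K * W) * Wᴴ = (V * Vᴴ) * K * (W * Wᴴ) by noncomm_ring, v2, w2]; simp
  have hLb : L * diagonal (fun i => (b i : ℂ)) = diagonal (fun i => (t i : ℂ)) * L := by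
    have e : Vᴴ * (K * B) * W = Vᴴ * (T * K) * W := by rw [h]
    rw [eB, eT, show Vᴴ * (K * (W * diagonal (fun i => (b i : ℂ)) * Wᴴ)) * W =
      (Vᴴ * K * W) * diagonal (fun i => (b i : ℂ)) * (Wᴴ * W) by noncomm_ring,
      show Vᴴ * (V * diagonal (fun i => (t i : ℂ)) * Vᴴ * K) * W =
      (Vᴴ * V) * diagonal (fun i => (t i : ℂ)) * (Vᴴ * K * W) by noncomm_ring, v1, w1] at e
    simpa using e
  have hLf : L * diagonal (fun i => (f (b i) : ℂ)) = diagonal (fun i => (f (t i) : ℂ)) * L := by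
    ext k l
    have := congrFun (congrFun hLb k) l
    rw [mul_diagonal, diagonal_mul] at this ⊢
    by_cases hkl : b l = t k
    · rw [hkl, mul_comm]
    · have h0 : ((b l : ℂ) - t k) * L k l = 0 := by linear_combination this
      have hne : (b l : ℂ) - t k ≠ 0 := by
        rw [sub_ne_zero]; exact_mod_cast hkl
      rw [(mul_eq_zero.1 h0).resolve_left hne]; simp
  rw [hK]
  calc _ = V * (L * (Wᴴ * W) * diagonal (fun i => (f (b i) : ℂ))) * Wᴴ := by noncomm_ring
    _ = V * (diagonal (fun i => (f (t i) : ℂ)) * (Vᴴ * V) * L) * Wᴴ := by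
      rw [w1, v1, Matrix.mul_one, Matrix.mul_one, hLf]
    _ = _ := by noncomm_ring

set_option maxHeartbeats 4000000 in
theorem aux_main_s17 {n : ℕ} (ρ σ : Matrix (Fin n) (Fin n) ℂ)
    (hρ : ρ.PosSemidef) (hσ : σ.PosSemidef)
    (hsupp : ∀ v : Fin n → ℂ, σ *ᵥ v = 0 → ρ *ᵥ v = 0)
    (hcomm : ρ * σ ≠ σ * ρ) :
    (Matrix.trace (ρ * (mlog ρ - mlog σ))).re
      < (Matrix.trace (ρ * mlog (mpow ρ (1/2) * mpow σ (-1) * mpow ρ (1/2)))).re := by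
  obtain ⟨W₁, r, a1, a1', hr, eρ, fρ⟩ := aux_spec_s17 ρ hρ
  obtain ⟨W₂, q, a2, a2', hq, eσ, fσ⟩ := aux_spec_s17 σ hσ
  have conj_diag : ∀ (W : Matrix (Fin n) (Fin n) ℂ) (g : Fin n → ℝ),
      (W * diagonal (fun i => (g i : ℂ)) * Wᴴ)ᴴ = W * diagonal (fun i => (g i : ℂ)) * Wᴴ := by
    intro W g
    rw [conjTranspose_mul, conjTranspose_mul, conjTranspose_conjTranspose, diagonal_conjTranspose,
      ← Matrix.mul_assoc]
    congr 3; ext i; simp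
  have mul_diag : ∀ (W : Matrix (Fin n) (Fin n) ℂ) (_ : Wᴴ * W = 1) (g g' : Fin n → ℝ),
      (W * diagonal (fun i => (g i : ℂ)) * Wᴴ) * (W * diagonal (fun i => (g' i : ℂ)) * Wᴴ)
        = W * diagonal (fun i => ((g i * g' i : ℝ) : ℂ)) * Wᴴ := by
    intro W hW g g'
    rw [show (W * diagonal (fun i => (g i : ℂ)) * Wᴴ) * (W * diagonal (fun i => (g' i : ℂ)) * Wᴴ)
      = W * (diagonal (fun i => (g i : ℂ)) * (Wᴴ * W) * diagonal (fun i => (g' i : ℂ))) * Wᴴ by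
        noncomm_ring, hW, Matrix.mul_one, diagonal_mul_diagonal]
    simp
  obtain ⟨R, hR⟩ : ∃ X, X = mpow ρ (1/2) := ⟨_, rfl⟩
  rw [← hR]
  have eR : R = W₁ * diagonal (fun i => ((Real.sqrt (r i) : ℝ) : ℂ)) * W₁ᴴ := by
    rw [hR, mpow, fρ]
    congr 3; ext i; congr 1
    by_cases h : r i = 0
    · simp [h]
    · rw [if_neg h, Real.sqrt_eq_rpow]
  have hRH : Rᴴ = R := by rw [eR, conj_diag]
  have hRR : R * R = ρ := by
    rw [eR, mul_diag _ a1, eρ]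
    congr 3; ext i; rw [Real.mul_self_sqrt (hr i)]
  obtain ⟨S, hS⟩ : ∃ X, X = W₂ * diagonal (fun i => ((Real.sqrt (q i) : ℝ) : ℂ)) * W₂ᴴ := ⟨_, rfl⟩
  have hSH : Sᴴ = S := by rw [hS, conj_diag]
  have hSS : S * S = σ := by
    rw [hS, mul_diag _ a2, eσ]
    congr 3; ext i; rw [Real.mul_self_sqrt (hq i)]
  obtain ⟨G, hG⟩ : ∃ X, X = W₂ * diagonal (fun i => (((Real.sqrt (q i))⁻¹ : ℝ) : ℂ)) * W₂ᴴ := ⟨_, rfl⟩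
  have hGH : Gᴴ = G := by rw [hG, conj_diag]
  have hGG : mpow σ (-1) = G * G := by
    rw [hG, mul_diag _ a2, mpow, fσ]
    congr 3; ext i; congr 1
    by_cases h : q i = 0
    · simp [h]
    · rw [if_neg h, Real.rpow_neg_one, ← mul_inv, Real.mul_self_sqrt (hq i)]
  -- support
  obtain ⟨P, hP⟩ : ∃ X, X = S * G := ⟨_, rfl⟩
  have hσP : σ * (1 - P) = 0 := by
    rw [Matrix.mul_sub, Matrix.mul_one, hP, hS, hG, mul_diag _ a2]
    conv_lhs => rw [eσ]
    rw [mul_diag _ a2, sub_eq_zero]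
    congr 3; ext i; congr 1
    by_cases h : q i = 0
    · simp [h]
    · have : Real.sqrt (q i) ≠ 0 := by
        rw [Real.sqrt_ne_zero (hq i)]; exact h
      field_simp
  have hρP : ρ * (1 - P) = 0 := by
    ext i j
    have h1 : σ *ᵥ ((1 - P).col j) = 0 := by
      ext i
      exact congrFun (congrFun hσP i) j
    exact congrFun (hsupp _ h1) i
  have hPH : Pᴴ = P := by
    rw [hP, hS, hG, mul_diag _ a2, conj_diag]
  have hRP : R * (1 - P) = 0 := by
    rw [← conjTranspose_mul_self_eq_zero, conjTranspose_mul, hRH, ← Matrix.mul_assoc,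
      Matrix.mul_assoc _ R R, hRR, Matrix.mul_assoc, hρP, Matrix.mul_zero]
  have hRP' : R * P = R := by
    rw [Matrix.mul_sub, Matrix.mul_one, sub_eq_zero] at hRP; exact hRP.symm
  have hPR : P * R = R := by
    have := congrArg conjTranspose hRP'
    rwa [conjTranspose_mul, hRH, hPH] at this
  obtain ⟨K, hK⟩ : ∃ X, X = G * R := ⟨_, rfl⟩
  have hSK : S * K = R := by rw [hK, ← Matrix.mul_assoc, ← hP, hPR]
  have hKH : Kᴴ = R * G := by rw [hK, conjTranspose_mul, hRH, hGH]
  have hKS : Kᴴ * S = R := by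
    have := congrArg conjTranspose hSK
    rwa [conjTranspose_mul, hRH, hSH] at this
  have hBe : R * mpow σ (-1) * R = Kᴴ * K := by rw [hGG, hKH, hK]; noncomm_ring
  obtain ⟨V, t, v1, v2, ht, eT, fT⟩ := aux_spec_s17 (K * Kᴴ) (posSemidef_self_mul_conjTranspose K)
  have hint := aux_intertwine_s17 K (Kᴴ * K) (K * Kᴴ) (posSemidef_conjTranspose_mul_self K)
    (posSemidef_self_mul_conjTranspose K) (by noncomm_ring) Real.log
  obtain ⟨M, hM⟩ : ∃ X, X = S * V := ⟨_, rfl⟩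
  have hMH : Mᴴ = Vᴴ * S := by rw [hM, conjTranspose_mul, hSH]
  have hρM : ρ = M * diagonal (fun k => (t k : ℂ)) * Mᴴ := by
    rw [hMH, hM, show S * V * diagonal (fun k => (t k : ℂ)) * (Vᴴ * S) =
      S * (V * diagonal (fun k => (t k : ℂ)) * Vᴴ) * S by noncomm_ring, ← eT,
      show S * (K * Kᴴ) * S = (S * K) * (Kᴴ * S) by noncomm_ring, hSK, hKS, hRR]
  have hσM : σ = M * Mᴴ := by
    rw [hMH, hM, show S * V * (Vᴴ * S) = S * (V * Vᴴ) * S by noncomm_ring, v2, Matrix.mul_one, hSS]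
  have trM : ∀ g : Fin n → ℝ, (trace (M * diagonal (fun k => (g k : ℂ)) * Mᴴ)).re
      = ∑ k, g k * ∑ i, ‖M i k‖ ^ 2 := by
    intro g
    have := aux_tr M (fun _ => 1) g
    simp only [Complex.ofReal_one, diagonal_one, Matrix.one_mul] at this
    rw [this, Finset.sum_comm]
    refine Finset.sum_congr rfl fun k _ => ?_
    rw [Finset.mul_sum]
    simp
  have hBS : (trace (ρ * mlog (Kᴴ * K))).re = ∑ k, t k * (∑ i, ‖M i k‖ ^ 2) * Real.log (t k) := by
    have : trace (ρ * mlog (Kᴴ * K)) =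
        trace (M * diagonal (fun k => ((Real.log (t k) * t k : ℝ) : ℂ)) * Mᴴ) := by
      rw [mlog]
      calc _ = trace (R * (S * (K * cfc Real.log (Kᴴ * K)))) := by
            rw [← Matrix.mul_assoc S, hSK, ← hRR, Matrix.mul_assoc]
        _ = trace (S * cfc Real.log (K * Kᴴ) * (K * Kᴴ) * S) := by
            rw [hint, trace_mul_comm]
            conv_lhs => rw [← hKS]
            congr 1; noncomm_ring
        _ = _ := by
            rw [fT]
            conv_lhs => rw [Matrix.mul_assoc S, eT]
            rw [mul_diag _ v1, hMH, hM]; congr 1; noncomm_ring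
    rw [this, trM]
    exact Finset.sum_congr rfl fun k _ => by ring
  rw [hBe, hBS]
  -- Umegaki side
  obtain ⟨U, hU⟩ : ∃ X, X = W₁ᴴ * W₂ := ⟨_, rfl⟩
  have trU : ∀ a b : Fin n → ℝ, (trace ((W₁ * diagonal (fun i => (a i : ℂ)) * W₁ᴴ) *
      (W₂ * diagonal (fun i => (b i : ℂ)) * W₂ᴴ))).re = ∑ i, ∑ j, a i * b j * ‖U i j‖ ^ 2 := by
    intro a b
    rw [← aux_tr]
    rw [show (W₁ * diagonal (fun i => (a i : ℂ)) * W₁ᴴ) * (W₂ * diagonal (fun i => (b i : ℂ)) * W₂ᴴ)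
      = W₁ * (diagonal (fun i => (a i : ℂ)) * (W₁ᴴ * W₂) * diagonal (fun i => (b i : ℂ)) * W₂ᴴ) by
        noncomm_ring, trace_mul_comm, Matrix.mul_assoc _ W₂ᴴ]
    rw [hU, conjTranspose_mul, conjTranspose_conjTranspose]
  have trU1 : ∀ a : Fin n → ℝ, (trace (W₁ * diagonal (fun i => (a i : ℂ)) * W₁ᴴ)).re
      = ∑ i, ∑ j, a i * ‖U i j‖ ^ 2 := by
    intro a
    have := trU a (fun _ => 1)
    simp only [Complex.ofReal_one, diagonal_one, Matrix.mul_one, a2', mul_one] at this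
    exact this
  have hU0 : ∀ i j, r i ≠ 0 → q j = 0 → U i j = 0 := by
    intro i j hi hj
    have h1 : σ * W₂ = W₂ * diagonal (fun i => (q i : ℂ)) := by
      conv_lhs => rw [eσ]
      rw [Matrix.mul_assoc, a2, Matrix.mul_one]
    have h2 : W₁ᴴ * (ρ * W₂) = diagonal (fun i => (r i : ℂ)) * U := by
      conv_lhs => rw [eρ]
      rw [show W₁ᴴ * (W₁ * diagonal (fun i => (r i : ℂ)) * W₁ᴴ * W₂) =
        (W₁ᴴ * W₁) * diagonal (fun i => (r i : ℂ)) * (W₁ᴴ * W₂) by noncomm_ring, a1, Matrix.one_mul, ← hU]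
    have h3 : σ *ᵥ (W₂.col j) = 0 := by
      ext k
      have := congrFun (congrFun h1 k) j
      rw [mul_diagonal, hj] at this
      simp only [Complex.ofReal_zero, mul_zero] at this
      exact this
    have h4 := hsupp _ h3
    have h5 : ∀ k, (ρ * W₂) k j = 0 := fun k => congrFun h4 k
    have h6 : (W₁ᴴ * (ρ * W₂)) i j = 0 := by
      rw [Matrix.mul_apply]; simp [h5]
    rw [h2, diagonal_mul] at h6
    exact (mul_eq_zero.1 h6).resolve_left (by exact_mod_cast hi)
  have hD : (trace (ρ * (mlog ρ - mlog σ))).re =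
      ∑ x : Fin n × Fin n, r x.1 * ‖U x.1 x.2‖ ^ 2 * Real.log (r x.1 / q x.2) := by
    rw [Matrix.mul_sub, trace_sub, Complex.sub_re, mlog, mlog, fρ, fσ]
    conv_lhs => rw [eρ]
    rw [mul_diag _ a1, trU, trU1, Fintype.sum_prod_type, ← Finset.sum_sub_distrib]
    refine Finset.sum_congr rfl fun i _ => ?_
    rw [← Finset.sum_sub_distrib]
    refine Finset.sum_congr rfl fun j _ => ?_
    by_cases hi : r i = 0
    · simp [hi]
    by_cases hj : q j = 0
    · simp [hU0 i j hi hj]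
    rw [Real.log_div hi hj]; ring
  rw [hD]
  refine aux_scalar2 (fun x : Fin n × Fin n => r x.1 * ‖U x.1 x.2‖ ^ 2) (fun x => r x.1 / q x.2)
    (fun k => t k * (∑ i, ‖M i k‖ ^ 2)) t ?_ ?_ ht ?_ ?_ ?_
  · intro x; exact div_nonneg (hr _) (hq _)
  · rintro ⟨i, j⟩ hx
    simp only at hx ⊢
    have hi : r i ≠ 0 := fun h => hx (by simp [h])
    have hj : q j ≠ 0 := fun h => hx (by simp [hU0 i j hi h])
    exact div_pos ((hr i).lt_of_ne hi.symm) ((hq j).lt_of_ne hj.symm)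
  · intro k hk
    exact (ht k).lt_of_ne fun h => hk (by simp [← h])
  · rw [← trM, ← hρM]
    conv_rhs => rw [eρ]
    rw [trU1, Fintype.sum_prod_type]
  · intro s hs
    obtain ⟨Y, hY⟩ := aux_left W₁ W₂ r q a1 a1' a2 a2' hr hq s hs
    rw [← eρ, ← eσ, ← hU] at hY
    have := aux_core ρ σ M t ht hρM hσM hcomm Y s hs
    rw [hY] at this
    rw [Fintype.sum_prod_type]
    convert this using 1
    · exact Finset.sum_congr rfl fun k _ => by ring
    · refine Finset.sum_congr rfl fun i _ => Finset.sum_congr rfl fun j _ => ?_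
      by_cases hi : r i = 0
      · simp [hi]
      by_cases hj : q j = 0
      · simp [hU0 i j hi hj]
      simp only
      have h1 : 0 < q j := (hq j).lt_of_ne (Ne.symm hj)
      have h2 : 0 < r i := (hr i).lt_of_ne (Ne.symm hi)
      have h3 : r i + s * q j ≠ 0 := by positivity
      have h4 : r i / q j + s = (r i + s * q j) / q j := by field_simp
      rw [h4, div_div_eq_mul_div]
      ring


/-- for positive semidefinite non-commuting `ρ, σ` with
`supp ρ ⊆ supp σ`, the Umegaki relative entropy is strictly smaller than the
Belavkin–Staszewski relative entropy:
`Tr(ρ(log ρ − log σ)) < Tr(ρ · log(ρ^{1/2} σ⁻¹ ρ^{1/2}))`. -/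
theorem stmt17 {n : ℕ} (ρ σ : Matrix (Fin n) (Fin n) ℂ)
    (hρ : ρ.PosSemidef) (hσ : σ.PosSemidef)
    (hsupp : ∀ v : Fin n → ℂ, σ *ᵥ v = 0 → ρ *ᵥ v = 0)
    (hcomm : ρ * σ ≠ σ * ρ) :
    (Matrix.trace (ρ * (mlog ρ - mlog σ))).re
      < (Matrix.trace (ρ * mlog (mpow ρ (1/2) * mpow σ (-1) * mpow ρ (1/2)))).re := by
  exact aux_main_s17 ρ σ hρ hσ hsupp hcomm
end
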